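/- arXiv:2107.03171 — 2 statements merged into one kernel-verified Lean document; each statement's English description precedes it below -/
import Mathlib

section
/- There exist absolute constants a, b > 0 such that for every n ≥ 2, every truly n-variate Boolean function f : {0,1}^n → {0,1} of sensitivity s ≥ 2 satisfies pdeg(f) ≥ a · (log₂ n − b·log₂ s) / log₂ s. -/
/-!
Let `s` be the sensitivity of `f`. Huang's theorem bounds the Fourier degree of `f` by `s²`, and
Markov's inequality for polynomials then bounds its block sensitivity, so `f` has certificates of
size `s ^ 5`. For each coordinate `i`, certificates at the two ends of a sensitive edge in direction
`i` pin down `s ^ O(1)` coordinates such that, once all of them but `i` are fixed, `f` computes the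
bit `i` up to negation. A random hash function into `m = s ^ O(1)` buckets is injective on this set
with probability at least a half, so some bucket `T` of `n / (2 m)` good coordinates exists:
leaving `T` free and filling every other coordinate by a lookup through the hash function into a
table `Y i` of `m` bits, the restriction of `f` addresses the bit `i ∈ T`.

On these restrictions a polynomial of degree `d`, as a function of `i`, lies in a fixed space of
dimension at most `(m + 1) ^ d`. A random polynomial correct with probability `2 / 3` yields, for
every bit pattern `z` on `T`, a member of this space agreeing on average with `z` on `2 / 3` of the
coordinates. By the Sauer–Shelah lemma the thresholded members are only
`(#T + 1) ^ ((m + 1) ^ d)` patterns, so Massart's lemma forces `#T ≤ (m + 1) ^ O(d)`, that is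
`n ≤ s ^ O(d + 1)`.
-/

open scoped Classical

noncomputable def evalBool {ι : Type} (a : ι → Bool) (P : MvPolynomial ι ℝ) : ℝ :=
  MvPolynomial.eval (fun i => if a i then (1:ℝ) else 0) P

def HasProbPoly {ι : Type} (f : (ι → Bool) → Bool) (ε : ℝ) (d : ℕ) : Prop :=
  ∃ (k : ℕ) (w : Fin k → ℝ) (P : Fin k → MvPolynomial ι ℝ),
    (∀ i, 0 ≤ w i) ∧ (∑ i, w i = 1) ∧ (∀ i, (P i).totalDegree ≤ d) ∧
    ∀ a : ι → Bool,
      ∑ i ∈ Finset.univ.filter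
          (fun i => evalBool a (P i) ≠ (if f a then (1:ℝ) else 0)), w i ≤ ε

noncomputable def pdeg {ι : Type} (ε : ℝ) (f : (ι → Bool) → Bool) : ℕ :=
  sInf {d | HasProbPoly f ε d}

def TrulyVariate {ι : Type} (f : (ι → Bool) → Bool) : Prop :=
  ∀ i : ι, ∃ a, f (Function.update a i (!(a i))) ≠ f a

def ORf (n : ℕ) : (Fin n → Bool) → Bool := fun a => decide (∃ i, a i = true)

noncomputable def sensitivity {n : ℕ} (f : (Fin n → Bool) → Bool) : ℕ :=
  Finset.univ.sup (fun a : Fin n → Bool =>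
    (Finset.univ.filter (fun i : Fin n => f (Function.update a i (!(a i))) ≠ f a)).card)

/-! ### Signs, block flips and Walsh characters -/

section Walsh

variable {ι : Type*}

/-- The `±1` encoding `(-1) ^ b` of a bit, the convention in which Walsh characters are products of
signed coordinates. -/
noncomputable def boolSign (b : Bool) : ℝ := if b then -1 else 1

lemma boolSign_mul_self (b : Bool) : boolSign b * boolSign b = 1 := by
  cases b <;> simp [boolSign]

lemma boolSign_eq_neg_of_ne {b c : Bool} (h : b ≠ c) : boolSign b = -boolSign c := by
  cases b <;> cases c <;> simp_all [boolSign]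

lemma abs_boolSign (b : Bool) : |boolSign b| = 1 := by
  cases b <;> simp [boolSign]

/-- The point `a ⊕ 1_B` obtained from `a` by flipping the coordinates in `B`. Membership is decided
classically, so that it does not depend on a choice of `DecidableEq ι`. -/
noncomputable def flipOn (a : ι → Bool) (B : Finset ι) : ι → Bool := fun i => a i ^^ decide (i ∈ B)

lemma flipOn_apply_of_mem (a : ι → Bool) {B : Finset ι} {i : ι} (hi : i ∈ B) :
    flipOn a B i = !a i := by
  simp [flipOn, hi]

lemma flipOn_apply_of_notMem (a : ι → Bool) {B : Finset ι} {i : ι} (hi : i ∉ B) :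
    flipOn a B i = a i := by
  simp [flipOn, hi]

lemma flipOn_empty (a : ι → Bool) : flipOn a ∅ = a :=
  funext fun _ => flipOn_apply_of_notMem a (Finset.notMem_empty _)

lemma flipOn_filter_ne [Fintype ι] (a x : ι → Bool) : flipOn a {i | x i ≠ a i} = x := by
  funext i
  cases hx : x i <;> cases ha : a i <;> simp [flipOn, hx, ha]

/-- The Walsh character `χ_S`, the parity `(-1) ^ ∑ i ∈ S, x i`. -/
noncomputable def walsh (S : Finset ι) (x : ι → Bool) : ℝ := ∏ i ∈ S, boolSign (x i)

lemma walsh_mul_self (S : Finset ι) (x : ι → Bool) : walsh S x * walsh S x = 1 := by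
  rw [walsh, ← Finset.prod_mul_distrib]
  exact Finset.prod_eq_one fun i _ => boolSign_mul_self _

lemma abs_walsh (S : Finset ι) (x : ι → Bool) : |walsh S x| = 1 := by
  simp [walsh, Finset.abs_prod, abs_boolSign]

lemma sum_walsh_mul_walsh [Fintype ι] (x z : ι → Bool) :
    ∑ S, walsh S z * walsh S x = if z = x then 2 ^ Fintype.card ι else 0 := by
  have hprod : ∑ S, walsh S z * walsh S x = ∏ i, (1 + boolSign (z i) * boolSign (x i)) := by
    simp only [Finset.prod_one_add, walsh, Finset.prod_mul_distrib, Finset.powerset_univ]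
  rw [hprod]
  split_ifs with h
  · subst h
    simp only [boolSign_mul_self]
    norm_num
  · obtain ⟨i, hi⟩ := Function.ne_iff.1 h
    refine Finset.prod_eq_zero (Finset.mem_univ i) ?_
    rw [boolSign_eq_neg_of_ne hi, neg_mul, boolSign_mul_self, add_neg_cancel]

section DecidableEq

variable [DecidableEq ι]

lemma update_not_eq_flipOn (a : ι → Bool) (i : ι) :
    Function.update a i (!a i) = flipOn a {i} := by
  funext j
  by_cases h : j = i
  · subst h
    simp [flipOn]
  · simp [flipOn, h]

lemma flipOn_flipOn (a : ι → Bool) (B C : Finset ι) :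
    flipOn (flipOn a B) C = flipOn a (symmDiff B C) := by
  funext i
  by_cases hB : i ∈ B <;> by_cases hC : i ∈ C <;> simp [flipOn, Finset.mem_symmDiff, hB, hC]

lemma flipOn_flipOn_singleton (a : ι → Bool) {B : Finset ι} {i : ι} (hi : i ∈ B) :
    flipOn (flipOn a B) {i} = flipOn a (B.erase i) := by
  rw [flipOn_flipOn, symmDiff_of_ge (Finset.singleton_subset_iff.2 hi),
    Finset.sdiff_singleton_eq_erase]

lemma walsh_flipOn (S B : Finset ι) (x : ι → Bool) :
    walsh S (flipOn x B) = (-1) ^ (S ∩ B).card * walsh S x := by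
  have hsign (i : ι) : boolSign (flipOn x B i) = (if i ∈ B then -1 else 1) * boolSign (x i) := by
    by_cases hi : i ∈ B <;> cases hx : x i <;> simp [flipOn, boolSign, hi, hx]
  simp only [walsh, hsign, Finset.prod_mul_distrib]
  rw [Finset.prod_ite_mem, Finset.prod_const]

end DecidableEq

lemma flipOn_flipOn_self (a : ι → Bool) (B : Finset ι) : flipOn (flipOn a B) B = a := by
  rw [flipOn_flipOn, symmDiff_self, Finset.bot_eq_empty, flipOn_empty]

lemma flipOn_flipOn_comm (a : ι → Bool) (B C : Finset ι) :
    flipOn (flipOn a B) C = flipOn (flipOn a C) B := by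
  rw [flipOn_flipOn, flipOn_flipOn, symmDiff_comm]

lemma walsh_flipOn_singleton_of_mem {S : Finset ι} {i : ι} (hi : i ∈ S) (x : ι → Bool) :
    walsh S (flipOn x {i}) = -walsh S x := by
  simp [walsh_flipOn, hi]

lemma walsh_flipOn_singleton_of_notMem {S : Finset ι} {i : ι} (hi : i ∉ S) (x : ι → Bool) :
    walsh S (flipOn x {i}) = walsh S x := by
  simp [walsh_flipOn, hi]

variable [DecidableEq ι] [Fintype ι]

/-- The Fourier coefficient `ĝ(S)` of `g` with respect to the uniform measure on the cube. -/
noncomputable def walshCoeff (g : (ι → Bool) → ℝ) (S : Finset ι) : ℝ :=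
  (∑ x, g x * walsh S x) / 2 ^ Fintype.card ι

lemma sum_walshCoeff_mul_walsh (g : (ι → Bool) → ℝ) (x : ι → Bool) :
    ∑ S, walshCoeff g S * walsh S x = g x := by
  simp only [walshCoeff, div_mul_eq_mul_div, ← Finset.sum_div, Finset.sum_mul]
  rw [Finset.sum_comm]
  simp only [mul_assoc, ← Finset.mul_sum, sum_walsh_mul_walsh]
  simp

end Walsh

/-! ### Huang's theorem -/

section Huang

variable {ι : Type*} [LinearOrder ι] [LocallyFiniteOrderBot ι]

/-- Huang's signed adjacency operator of the cube graph whose edges point in the directions `S`. The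
sign of the edge in direction `i` is the parity of the coordinates below `i`, so that every square
of the cube has an odd number of negative edges. -/
noncomputable def signedAdj (S : Finset ι) : Module.End ℝ ((ι → Bool) → ℝ) where
  toFun v x := ∑ i ∈ S, walsh (Finset.Iio i) x * v (flipOn x {i})
  map_add' u v := by
    funext x
    simp [mul_add, Finset.sum_add_distrib]
  map_smul' c v := by
    funext x
    simp only [Pi.smul_apply, smul_eq_mul, RingHom.id_apply, Finset.mul_sum, mul_left_comm]

lemma signedAdj_apply (S : Finset ι) (v : (ι → Bool) → ℝ) (x : ι → Bool) :
    signedAdj S v x = ∑ i ∈ S, walsh (Finset.Iio i) x * v (flipOn x {i}) := rfl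

lemma walsh_Iio_mul_walsh_Iio_antisymm {i j : ι} (hij : i ≠ j) (x : ι → Bool) :
    walsh (Finset.Iio i) x * walsh (Finset.Iio j) (flipOn x {i}) =
      -(walsh (Finset.Iio j) x * walsh (Finset.Iio i) (flipOn x {j})) := by
  wlog h : i < j generalizing i j
  · rw [this hij.symm (hij.lt_or_gt.resolve_left h), neg_neg]
  rw [walsh_flipOn_singleton_of_mem (Finset.mem_Iio.2 h),
    walsh_flipOn_singleton_of_notMem (by simpa using h.le)]
  ring

lemma signedAdj_signedAdj (S : Finset ι) (v : (ι → Bool) → ℝ) :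
    signedAdj S (signedAdj S v) = (S.card : ℝ) • v := by
  funext x
  let t (i j : ι) : ℝ := walsh (Finset.Iio i) x * walsh (Finset.Iio j) (flipOn x {i}) *
    v (flipOn (flipOn x {i}) {j})
  have off_diag (i j : ι) (hij : i ≠ j) : t i j + t j i = 0 := by
    simp only [t, walsh_Iio_mul_walsh_Iio_antisymm hij, flipOn_flipOn_comm x {i} {j}]
    ring
  have diag (i : ι) : t i i = v x := by
    simp only [t]
    rw [walsh_flipOn_singleton_of_notMem (by simp), walsh_mul_self, flipOn_flipOn_self, one_mul]
  have symm_sum : ∑ i ∈ S, ∑ j ∈ S, (t i j + t j i) = ∑ i ∈ S, 2 * v x := by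
    refine Finset.sum_congr rfl fun i hi => ?_
    rw [Finset.sum_eq_single_of_mem i hi fun j _ hj => off_diag i j hj.symm, diag, two_mul]
  have expand : signedAdj S (signedAdj S v) x = ∑ i ∈ S, ∑ j ∈ S, t i j := by
    simp only [signedAdj_apply, Finset.mul_sum, t, mul_assoc]
  simp only [Finset.sum_add_distrib] at symm_sum
  rw [Finset.sum_comm (f := fun i j => t j i), ← expand] at symm_sum
  simp only [Finset.sum_const, nsmul_eq_mul] at symm_sum
  simp only [Pi.smul_apply, smul_eq_mul]
  linarith

lemma signedAdj_walsh_mul (S : Finset ι) (v : (ι → Bool) → ℝ) :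
    signedAdj S (walsh S * v) = -(walsh S * signedAdj S v) := by
  funext x
  simp only [signedAdj_apply, Pi.neg_apply, Pi.mul_apply, Finset.mul_sum, ← Finset.sum_neg_distrib]
  refine Finset.sum_congr rfl fun i hi => ?_
  rw [walsh_flipOn_singleton_of_mem hi]
  ring

variable [Fintype ι]

lemma two_pow_card_le_two_mul_finrank_eigenspace {S : Finset ι} {r : ℝ} (hr : r * r = S.card) :
    2 ^ Fintype.card ι ≤ 2 * Module.finrank ℝ ((signedAdj S).eigenspace r) := by
  set E := (signedAdj S).eigenspace r
  let A' : Module.End ℝ ((ι → Bool) → ℝ) := signedAdj S + r • 1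
  have range_le : A'.range ≤ E := by
    rintro _ ⟨v, rfl⟩
    rw [Module.End.mem_eigenspace_iff]
    simp only [A', LinearMap.add_apply, LinearMap.smul_apply, Module.End.one_apply, map_add,
      map_smul, signedAdj_signedAdj, smul_add, smul_smul, hr]
    exact add_comm _ _
  let D : ((ι → Bool) → ℝ) →ₗ[ℝ] ((ι → Bool) → ℝ) := LinearMap.mulLeft ℝ (walsh S)
  have D_injective : Function.Injective D := by
    refine Function.LeftInverse.injective (g := D) fun v => funext fun x => ?_
    simp [D, ← mul_assoc, walsh_mul_self]
  have map_ker_le : A'.ker.map D ≤ E := by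
    rintro _ ⟨v, hv, rfl⟩
    have hv : signedAdj S v = -(r • v) := eq_neg_of_add_eq_zero_left hv
    rw [Module.End.mem_eigenspace_iff]
    simp only [D, LinearMap.mulLeft_apply, signedAdj_walsh_mul, hv, mul_neg, neg_neg,
      mul_smul_comm]
  have rank_nullity := A'.finrank_range_add_finrank_ker
  have dim_range := Submodule.finrank_mono range_le
  have dim_ker := Submodule.finrank_mono map_ker_le
  rw [← (Submodule.equivMapOfInjective D D_injective A'.ker).finrank_eq] at dim_ker
  simp only [Module.finrank_fintype_fun_eq_card, Fintype.card_pi, Fintype.card_bool,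
    Finset.prod_const, Finset.card_univ] at rank_nullity
  omega

lemma exists_eigenvector_supportedOn {S : Finset ι} {r : ℝ} (hr : r * r = S.card)
    {H : Finset (ι → Bool)} (hH : 2 ^ Fintype.card ι < 2 * H.card) :
    ∃ v ≠ 0, signedAdj S v = r • v ∧ ∀ x ∉ H, v x = 0 := by
  let restr : ((ι → Bool) → ℝ) →ₗ[ℝ] ((Hᶜ : Finset _) → ℝ) := LinearMap.funLeft ℝ ℝ (↑)
  have ker_ne_bot : (restr.comp ((signedAdj S).eigenspace r).subtype).ker ≠ ⊥ := by
    apply LinearMap.ker_ne_bot_of_finrank_lt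
    have := two_pow_card_le_two_mul_finrank_eigenspace hr
    have := H.card_add_card_compl
    simp only [Fintype.card_pi, Fintype.card_bool, Finset.prod_const, Finset.card_univ] at this
    simp only [Module.finrank_fintype_fun_eq_card, Fintype.card_coe]
    omega
  obtain ⟨v, hv, hv0⟩ := (Submodule.ne_bot_iff _).1 ker_ne_bot
  refine ⟨v, fun h => hv0 (Subtype.ext h), Module.End.mem_eigenspace_iff.1 v.2, fun x hx => ?_⟩
  exact congrFun (LinearMap.mem_ker.1 hv) ⟨x, Finset.mem_compl.2 hx⟩

theorem exists_card_le_sq_degree (S : Finset ι) {H : Finset (ι → Bool)}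
    (hH : 2 ^ Fintype.card ι < 2 * H.card) :
    ∃ x ∈ H, S.card ≤ {i ∈ S | flipOn x {i} ∈ H}.card ^ 2 := by
  set r := √(S.card : ℝ)
  have hrr : r * r = S.card := Real.mul_self_sqrt (Nat.cast_nonneg _)
  obtain ⟨v, hv0, hAv, hvH⟩ := exists_eigenvector_supportedOn hrr hH
  obtain ⟨x, -, hmax⟩ := Finset.exists_max_image Finset.univ (fun x => |v x|) Finset.univ_nonempty
  have hx : 0 < |v x| := by
    obtain ⟨z, hz⟩ := Function.ne_iff.1 hv0
    exact (abs_pos.2 hz).trans_le (hmax z (Finset.mem_univ z))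
  refine ⟨x, by_contra fun hxH => hx.ne' (by rw [hvH x hxH, abs_zero]), ?_⟩
  have hdeg : r * |v x| ≤ {i ∈ S | flipOn x {i} ∈ H}.card * |v x| := by
    calc r * |v x| = |signedAdj S v x| := by
          rw [hAv, Pi.smul_apply, smul_eq_mul, abs_mul, abs_of_nonneg (Real.sqrt_nonneg _)]
      _ ≤ ∑ i ∈ S, |v (flipOn x {i})| := by
          rw [signedAdj_apply]
          refine (Finset.abs_sum_le_sum_abs _ _).trans_eq ?_
          simp only [abs_mul, abs_walsh, one_mul]
      _ = ∑ i ∈ S with flipOn x {i} ∈ H, |v (flipOn x {i})| := by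
          refine (Finset.sum_filter_of_ne fun i _ hi => ?_).symm
          exact by_contra fun h => hi (by rw [hvH _ h, abs_zero])
      _ ≤ {i ∈ S | flipOn x {i} ∈ H}.card * |v x| := by
          rw [← nsmul_eq_mul]
          exact Finset.sum_le_card_nsmul _ _ _ fun i _ => hmax _ (Finset.mem_univ _)
  have hr_le := le_of_mul_le_mul_right hdeg hx
  have : (S.card : ℝ) ≤ ({i ∈ S | flipOn x {i} ∈ H}.card : ℝ) ^ 2 := by
    rw [← hrr, ← sq]
    exact pow_le_pow_left₀ (Real.sqrt_nonneg _) hr_le 2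
  exact_mod_cast this

theorem exists_card_le_sq_of_walshCoeff_ne_zero {f : (ι → Bool) → Bool} {S : Finset ι}
    (hS : walshCoeff (fun x => boolSign (f x)) S ≠ 0) :
    ∃ x, S.card ≤ {i ∈ S | f (flipOn x {i}) ≠ f x}.card ^ 2 := by
  let H (c : ℝ) : Finset (ι → Bool) := {x | boolSign (f x) * walsh S x = c}
  have key (c : ℝ) (hc : c ≠ 0) (hH : 2 ^ Fintype.card ι < 2 * (H c).card) :
      ∃ x, S.card ≤ {i ∈ S | f (flipOn x {i}) ≠ f x}.card ^ 2 := by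
    obtain ⟨x, hx, hdeg⟩ := exists_card_le_sq_degree S hH
    refine ⟨x, hdeg.trans (Nat.pow_le_pow_left (Finset.card_le_card fun i hi => ?_) 2)⟩
    obtain ⟨hiS, hi⟩ := Finset.mem_filter.1 hi
    refine Finset.mem_filter.2 ⟨hiS, fun hf => hc ?_⟩
    have hx : boolSign (f x) * walsh S x = c := (Finset.mem_filter.1 hx).2
    have hi : boolSign (f (flipOn x {i})) * walsh S (flipOn x {i}) = c := (Finset.mem_filter.1 hi).2
    rw [hf, walsh_flipOn_singleton_of_mem hiS] at hi
    linarith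
  have hval (x : ι → Bool) : boolSign (f x) * walsh S x = 1 ∨ boolSign (f x) * walsh S x = -1 := by
    apply eq_or_eq_neg_of_abs_eq
    rw [abs_mul, abs_boolSign, abs_walsh, one_mul]
  have hsum : ∑ x, boolSign (f x) * walsh S x = (H 1).card - (H (-1)).card := by
    simp only [H, Finset.card_filter, Nat.cast_sum, ← Finset.sum_sub_distrib]
    refine Finset.sum_congr rfl fun x _ => ?_
    rcases hval x with h | h <;> rw [h] <;> norm_num
  have hcard : (H 1).card + (H (-1)).card = 2 ^ Fintype.card ι := by
    have hcompl : H (-1) = (H 1)ᶜ := by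
      ext x
      rcases hval x with h | h <;> simp [H, h] <;> norm_num
    rw [hcompl, Finset.card_add_card_compl]
    simp
  have hne : (H 1).card ≠ (H (-1)).card := fun h => hS (by rw [walshCoeff, hsum, h]; simp)
  rcases lt_or_gt_of_ne hne with h | h
  · exact key (-1) (by norm_num) (by omega)
  · exact key 1 one_ne_zero (by omega)

end Huang

/-! ### Probabilistic polynomials -/

section ProbPoly

lemma exists_evalBool_eq {ι : Type} [Finite ι] (g : (ι → Bool) → ℝ) :
    ∃ P : MvPolynomial ι ℝ, ∀ a, evalBool a P = g a := by
  have := Fintype.ofFinite ι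
  refine ⟨∑ S, MvPolynomial.C (walshCoeff g S) *
    ∏ i ∈ S, (1 - MvPolynomial.C 2 * MvPolynomial.X i), fun a => ?_⟩
  have hsign (i : ι) : 1 - 2 * (if a i then (1 : ℝ) else 0) = boolSign (a i) := by
    cases a i <;> norm_num [boolSign]
  simp only [evalBool, ← sum_walshCoeff_mul_walsh g a, walsh, ← hsign, map_sum, map_mul, map_prod,
    map_sub, map_one, MvPolynomial.eval_C, MvPolynomial.eval_X]

lemma hasProbPoly_pdeg {ι : Type} [Finite ι] (f : (ι → Bool) → Bool) {ε : ℝ} (hε : 0 ≤ ε) :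
    HasProbPoly f ε (pdeg ε f) := by
  obtain ⟨P, hP⟩ := exists_evalBool_eq fun a => if f a then (1 : ℝ) else 0
  have exact_poly : HasProbPoly f ε P.totalDegree :=
    ⟨1, fun _ => 1, fun _ => P, by simp, by simp, by simp, fun a => by simpa [hP] using hε⟩
  exact Nat.sInf_mem (s := {d | HasProbPoly f ε d}) ⟨_, exact_poly⟩

theorem exists_card_agree_ge {ι : Type} {κ : Type*} [Fintype κ] {f : (ι → Bool) → Bool}
    {ε : ℝ} {d : ℕ} (hf : HasProbPoly f ε d) (x : κ → ι → Bool) :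
    ∃ P : MvPolynomial ι ℝ, P.totalDegree ≤ d ∧ (1 - ε) * Fintype.card κ ≤
      ({k | evalBool (x k) P = if f (x k) then 1 else 0} : Finset κ).card := by
  obtain ⟨m, w, P, hw, hw1, hdeg, herr⟩ := hf
  let good (i : Fin m) : Finset κ := {k | evalBool (x k) (P i) = if f (x k) then 1 else 0}
  have hsuccess (k : κ) : 1 - ε ≤ ∑ i with k ∈ good i, w i := by
    have := Finset.sum_filter_add_sum_filter_not Finset.univ (fun i => k ∈ good i) w
    have := herr (x k)
    simp only [good, Finset.mem_filter, Finset.mem_univ, true_and] at *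
    linarith
  by_contra! hbad
  have hlt : ∑ i, w i • ((good i).card : ℝ) < (1 - ε) * Fintype.card κ :=
    (convex_Iio ((1 - ε) * Fintype.card κ)).sum_mem (fun i _ => hw i) hw1
      fun i _ => hbad (P i) (hdeg i)
  have hcount : ∑ i, w i • ((good i).card : ℝ) = ∑ k, ∑ i with k ∈ good i, w i := by
    simp only [Finset.sum_filter, smul_eq_mul]
    rw [Finset.sum_comm]
    simp [mul_comm]
  rw [hcount] at hlt
  refine hlt.not_ge ?_
  calc (1 - ε) * Fintype.card κ = ∑ _k : κ, (1 - ε) := by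
        rw [Finset.sum_const, Finset.card_univ, nsmul_eq_mul, mul_comm]
    _ ≤ _ := Finset.sum_le_sum fun k _ => hsuccess k

end ProbPoly

/-! ### Block sensitivity and degree -/

section BlockSensitivity

open Polynomial

lemma abs_eval_one_derivative_le_of_forall_abs_le_one {P : ℝ[X]} {D : ℕ} (hdeg : P.degree ≤ D)
    (hbound : ∀ r ∈ Set.Icc (-1 : ℝ) 1, |P.eval r| ≤ 1) :
    |(derivative P).eval 1| ≤ (D : ℝ) ^ 2 := by
  have upper {Q : ℝ[X]} (hdeg : Q.degree ≤ D) (hbound : ∀ r ∈ Set.Icc (-1 : ℝ) 1, |Q.eval r| ≤ 1) :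
      (derivative Q).eval 1 ≤ (D : ℝ) ^ 2 := by
    have := Chebyshev.eval_iterate_derivative_le_of_forall_abs_le_one (k := 1) le_rfl hdeg hbound
    simpa [Chebyshev.T_derivative_eq_U, sq] using this
  have lower := upper (Q := -P) (by rwa [degree_neg]) (by simpa using hbound)
  rw [derivative_neg, eval_neg] at lower
  exact abs_le.2 ⟨by linarith, upper hdeg hbound⟩

variable {ι : Type*} [DecidableEq ι] {𝓑 : Finset (Finset ι)}

/-- The blocks of `𝓑` that meet `M` in an odd number of points, i.e. those whose flip changes the
sign of `χ_M`. -/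
def oddBlocks (𝓑 : Finset (Finset ι)) (M : Finset ι) : Finset (Finset ι) :=
  {B ∈ 𝓑 | Odd (M ∩ B).card}

lemma card_oddBlocks_le (h𝓑 : (𝓑 : Set (Finset ι)).PairwiseDisjoint id) (M : Finset ι) :
    (oddBlocks 𝓑 M).card ≤ M.card := by
  have hdisj : (oddBlocks 𝓑 M : Set (Finset ι)).PairwiseDisjoint (M ∩ ·) := fun B hB B' hB' h =>
    (h𝓑 (Finset.mem_filter.1 hB).1 (Finset.mem_filter.1 hB').1 h).mono
      Finset.inter_subset_right Finset.inter_subset_right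
  calc (oddBlocks 𝓑 M).card ≤ ∑ B ∈ oddBlocks 𝓑 M, (M ∩ B).card := by
        rw [Finset.card_eq_sum_ones]
        exact Finset.sum_le_sum fun B hB => (Finset.mem_filter.1 hB).2.pos
    _ = ((oddBlocks 𝓑 M).biUnion (M ∩ ·)).card := (Finset.card_biUnion hdisj).symm
    _ ≤ M.card := Finset.card_le_card (Finset.biUnion_subset.2 fun _ _ => Finset.inter_subset_left)

lemma walsh_flipOn_biUnion (h𝓑 : (𝓑 : Set (Finset ι)).PairwiseDisjoint id) (M : Finset ι)
    (a : ι → Bool) :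
    walsh M (flipOn a (𝓑.biUnion id)) = (∏ B ∈ 𝓑, (-1) ^ (M ∩ B).card) * walsh M a := by
  rw [walsh_flipOn, Finset.inter_biUnion, Finset.card_biUnion, Finset.prod_pow_eq_pow_sum]
  · rfl
  · exact fun B hB B' hB' h =>
      (h𝓑 hB hB' h).mono Finset.inter_subset_right Finset.inter_subset_right

variable [Fintype ι]

/-- The polynomial whose value at `r` is the expectation of `g` at the point obtained from `a` by
flipping each block of `𝓑` independently with probability `(1 - r) / 2`, see `eval_noisePoly`. -/
noncomputable def noisePoly (g : (ι → Bool) → ℝ) (a : ι → Bool) (𝓑 : Finset (Finset ι)) : ℝ[X] :=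
  ∑ M, C (walshCoeff g M * walsh M a) * X ^ (oddBlocks 𝓑 M).card

lemma eval_noisePoly (h𝓑 : (𝓑 : Set (Finset ι)).PairwiseDisjoint id) (g : (ι → Bool) → ℝ)
    (a : ι → Bool) (r : ℝ) :
    (noisePoly g a 𝓑).eval r = ∑ t ∈ 𝓑.powerset,
      ((1 - r) / 2) ^ t.card * ((1 + r) / 2) ^ (𝓑.card - t.card) * g (flipOn a (t.biUnion id)) := by
  have factor (M B : Finset ι) : (1 - r) / 2 * (-1) ^ (M ∩ B).card + (1 + r) / 2 =
      if Odd (M ∩ B).card then r else 1 := by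
    split_ifs with h
    · rw [h.neg_one_pow]; ring
    · rw [(Nat.not_odd_iff_even.1 h).neg_one_pow]; ring
  have character (M : Finset ι) : r ^ (oddBlocks 𝓑 M).card * walsh M a = ∑ t ∈ 𝓑.powerset,
      ((1 - r) / 2) ^ t.card * ((1 + r) / 2) ^ (𝓑.card - t.card) *
        walsh M (flipOn a (t.biUnion id)) := by
    rw [oddBlocks, ← Finset.prod_const, Finset.prod_filter,
      ← Finset.prod_congr rfl fun B _ => factor M B, Finset.prod_add, Finset.sum_mul]
    refine Finset.sum_congr rfl fun t ht => ?_
    have ht := Finset.mem_powerset.1 ht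
    rw [walsh_flipOn_biUnion (h𝓑.subset ht), Finset.prod_mul_distrib, Finset.prod_const,
      Finset.prod_const, Finset.card_sdiff_of_subset ht]
    ring
  simp only [← sum_walshCoeff_mul_walsh g, noisePoly, eval_finsetSum, eval_mul, eval_C, eval_pow,
    eval_X, Finset.mul_sum]
  rw [Finset.sum_comm]
  refine Finset.sum_congr rfl fun M _ => ?_
  rw [mul_assoc, mul_comm (walsh M a), character, Finset.mul_sum]
  exact Finset.sum_congr rfl fun t _ => mul_left_comm _ _ _

lemma abs_eval_noisePoly_le_one (h𝓑 : (𝓑 : Set (Finset ι)).PairwiseDisjoint id)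
    {g : (ι → Bool) → ℝ} (hg : ∀ x, |g x| ≤ 1) (a : ι → Bool) {r : ℝ} (hr : r ∈ Set.Icc (-1) 1) :
    |(noisePoly g a 𝓑).eval r| ≤ 1 := by
  have hflip : 0 ≤ (1 - r) / 2 := by linarith [hr.2]
  have hkeep : 0 ≤ (1 + r) / 2 := by linarith [hr.1]
  calc |(noisePoly g a 𝓑).eval r|
      ≤ ∑ t ∈ 𝓑.powerset, ((1 - r) / 2) ^ t.card * ((1 + r) / 2) ^ (𝓑.card - t.card) := by
        rw [eval_noisePoly h𝓑]
        refine (Finset.abs_sum_le_sum_abs _ _).trans (Finset.sum_le_sum fun t _ => ?_)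
        rw [abs_mul, abs_of_nonneg (by positivity)]
        exact mul_le_of_le_one_right (by positivity) (hg _)
    _ = 1 := by
        rw [Finset.sum_pow_mul_eq_add_pow, ← add_div, sub_add_add_cancel, one_add_one_eq_two,
          div_self two_ne_zero, one_pow]

lemma degree_noisePoly_le (h𝓑 : (𝓑 : Set (Finset ι)).PairwiseDisjoint id) {g : (ι → Bool) → ℝ}
    {D : ℕ} (hD : ∀ S, walshCoeff g S ≠ 0 → S.card ≤ D) (a : ι → Bool) :
    (noisePoly g a 𝓑).degree ≤ D := by
  refine (degree_sum_le _ _).trans (Finset.sup_le fun M _ => ?_)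
  by_cases hM : walshCoeff g M = 0
  · simp [hM]
  · exact (degree_C_mul_X_pow_le _ _).trans
      (Nat.cast_le.2 ((card_oddBlocks_le h𝓑 M).trans (hD M hM)))

lemma eval_one_derivative_noisePoly (g : (ι → Bool) → ℝ) (a : ι → Bool) (𝓑 : Finset (Finset ι)) :
    (derivative (noisePoly g a 𝓑)).eval 1 = ∑ B ∈ 𝓑, (g a - g (flipOn a B)) / 2 := by
  have count (M : Finset ι) :
      ((oddBlocks 𝓑 M).card : ℝ) = ∑ B ∈ 𝓑, (1 - (-1) ^ (M ∩ B).card) / 2 := by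
    rw [oddBlocks, Finset.card_filter, Nat.cast_sum]
    refine Finset.sum_congr rfl fun B _ => ?_
    split_ifs with h
    · rw [h.neg_one_pow]; norm_num
    · rw [(Nat.not_odd_iff_even.1 h).neg_one_pow]; norm_num
  simp only [noisePoly, derivative_sum, derivative_C_mul_X_pow, eval_finsetSum, eval_mul, eval_C,
    eval_pow, eval_X, one_pow, mul_one, count, ← sum_walshCoeff_mul_walsh g, walsh_flipOn,
    ← Finset.sum_sub_distrib, Finset.mul_sum, Finset.sum_div]
  rw [Finset.sum_comm]
  refine Finset.sum_congr rfl fun B _ => Finset.sum_congr rfl fun M _ => ?_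
  ring

theorem abs_sum_sub_flipOn_le {g : (ι → Bool) → ℝ} (hg : ∀ x, |g x| ≤ 1) {D : ℕ}
    (hD : ∀ S, walshCoeff g S ≠ 0 → S.card ≤ D) (a : ι → Bool)
    (h𝓑 : (𝓑 : Set (Finset ι)).PairwiseDisjoint id) :
    |∑ B ∈ 𝓑, (g a - g (flipOn a B))| ≤ 2 * (D : ℝ) ^ 2 := by
  have := abs_eval_one_derivative_le_of_forall_abs_le_one (degree_noisePoly_le h𝓑 hD a)
    fun r hr => abs_eval_noisePoly_le_one h𝓑 hg a hr
  rw [eval_one_derivative_noisePoly, ← Finset.sum_div, abs_div, abs_two] at this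
  linarith

theorem card_le_sq_of_pairwiseDisjoint_sensitive {f : (ι → Bool) → Bool} {D : ℕ}
    (hD : ∀ S, walshCoeff (fun x => boolSign (f x)) S ≠ 0 → S.card ≤ D) {a : ι → Bool}
    (h𝓑 : (𝓑 : Set (Finset ι)).PairwiseDisjoint id) (hf : ∀ B ∈ 𝓑, f (flipOn a B) ≠ f a) :
    𝓑.card ≤ D ^ 2 := by
  have hsum : ∑ B ∈ 𝓑, (boolSign (f a) - boolSign (f (flipOn a B))) =
      𝓑.card * (2 * boolSign (f a)) := by
    rw [← nsmul_eq_mul, ← Finset.sum_const]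
    refine Finset.sum_congr rfl fun B hB => ?_
    rw [boolSign_eq_neg_of_ne (hf B hB), sub_neg_eq_add, two_mul]
  have := abs_sum_sub_flipOn_le (fun x => (abs_boolSign (f x)).le) hD a h𝓑
  rw [hsum, abs_mul, abs_mul, abs_boolSign, abs_two, Nat.abs_cast] at this
  have : (𝓑.card : ℝ) ≤ (D : ℝ) ^ 2 := by linarith
  exact_mod_cast this

end BlockSensitivity

/-! ### Certificates -/

section Certificate

variable {ι : Type*} {f : (ι → Bool) → Bool} {a : ι → Bool}

/-- `U` is a certificate for `f` at `a`: the coordinates of `a` in `U` already determine `f a`. -/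
def IsCertificate (f : (ι → Bool) → Bool) (a : ι → Bool) (U : Finset ι) : Prop :=
  ∀ x, (∀ i ∈ U, x i = a i) → f x = f a

lemma IsCertificate.mem_of_flipOn_ne {U : Finset ι} (hU : IsCertificate f a U) {i : ι}
    (hi : f (flipOn a {i}) ≠ f a) : i ∈ U := by
  by_contra hiU
  refine hi (hU _ fun j hj => flipOn_apply_of_notMem a ?_)
  rw [Finset.mem_singleton]
  rintro rfl
  exact hiU hj

lemma card_le_of_minimal_sensitive [Fintype ι] {s : ℕ}
    (hs : ∀ x, ({i | f (flipOn x {i}) ≠ f x} : Finset ι).card ≤ s)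
    {B : Finset ι} (hB : Minimal (fun B => f (flipOn a B) ≠ f a) B) : B.card ≤ s := by
  refine (Finset.card_le_card fun i hi => ?_).trans (hs (flipOn a B))
  have := hB.not_prop_of_lt (Finset.erase_ssubset hi)
  rw [not_not] at this
  simpa [flipOn_flipOn_singleton a hi, this] using hB.prop.symm

lemma isCertificate_biUnion_of_maximal [Finite ι] [DecidableEq ι] {𝓑 : Finset (Finset ι)}
    (h𝓑 : Maximal (fun 𝓑 : Finset (Finset ι) => (𝓑 : Set (Finset ι)).PairwiseDisjoint id ∧
      ∀ B ∈ 𝓑, Minimal (fun B => f (flipOn a B) ≠ f a) B) 𝓑) :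
    IsCertificate f a (𝓑.biUnion id) := by
  have := Fintype.ofFinite ι
  intro x hx
  by_contra hne
  obtain ⟨B, hBx, hB⟩ := Finite.exists_le_minimal (p := fun B => f (flipOn a B) ≠ f a)
    (a := ({i | x i ≠ a i} : Finset ι)) (by rwa [flipOn_filter_ne])
  have hdisj : ∀ B' ∈ 𝓑, Disjoint B B' := fun B' hB' => Finset.disjoint_left.2 fun i hi hi' =>
    (Finset.mem_filter.1 (hBx hi)).2 (hx i (Finset.mem_biUnion.2 ⟨B', hB', hi'⟩))
  have hB𝓑 : B ∈ 𝓑 := by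
    refine h𝓑.le_of_ge ⟨?_, (Finset.forall_mem_insert _ _ _).2 ⟨hB, h𝓑.prop.2⟩⟩
      (Finset.subset_insert B 𝓑) (Finset.mem_insert_self B 𝓑)
    rw [Finset.coe_insert]
    exact h𝓑.prop.1.insert fun B' hB' _ => hdisj B' hB'
  have hB_empty : B = ∅ := disjoint_self.1 (hdisj B hB𝓑)
  exact hB.prop (by rw [hB_empty, flipOn_empty])

theorem exists_isCertificate_card_le [Fintype ι] [DecidableEq ι] {s D : ℕ}
    (hs : ∀ x, ({i | f (flipOn x {i}) ≠ f x} : Finset ι).card ≤ s)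
    (hD : ∀ S, walshCoeff (fun x => boolSign (f x)) S ≠ 0 → S.card ≤ D) (a : ι → Bool) :
    ∃ U, IsCertificate f a U ∧ U.card ≤ D ^ 2 * s := by
  obtain ⟨𝓑, -, h𝓑⟩ := Finite.exists_le_maximal
    (p := fun 𝓑 : Finset (Finset ι) => (𝓑 : Set (Finset ι)).PairwiseDisjoint id ∧
      ∀ B ∈ 𝓑, Minimal (fun B => f (flipOn a B) ≠ f a) B) (a := ∅) (by simp)
  refine ⟨𝓑.biUnion id, isCertificate_biUnion_of_maximal h𝓑, ?_⟩
  calc (𝓑.biUnion id).card ≤ 𝓑.card * s :=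
        Finset.card_biUnion_le_card_mul _ _ _ fun B hB =>
          card_le_of_minimal_sensitive hs (h𝓑.prop.2 B hB)
    _ ≤ D ^ 2 * s := Nat.mul_le_mul_right s <|
        card_le_sq_of_pairwiseDisjoint_sensitive hD h𝓑.prop.1 fun B hB => (h𝓑.prop.2 B hB).prop

theorem exists_isCertificate_card_le_sensitivity_pow {n : ℕ} (f : (Fin n → Bool) → Bool)
    (a : Fin n → Bool) : ∃ U, IsCertificate f a U ∧ U.card ≤ sensitivity f ^ 5 := by
  have hs (x : Fin n → Bool) :
      ({i | f (flipOn x {i}) ≠ f x} : Finset (Fin n)).card ≤ sensitivity f := by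
    simp only [sensitivity, update_not_eq_flipOn]
    exact Finset.le_sup (f := fun x => ({i | f (flipOn x {i}) ≠ f x} : Finset (Fin n)).card)
      (Finset.mem_univ x)
  have hD (S : Finset (Fin n)) (hS : walshCoeff (fun x => boolSign (f x)) S ≠ 0) :
      S.card ≤ sensitivity f ^ 2 := by
    obtain ⟨x, hx⟩ := exists_card_le_sq_of_walshCoeff_ne_zero hS
    refine hx.trans (Nat.pow_le_pow_left ((Finset.card_le_card ?_).trans (hs x)) 2)
    exact Finset.filter_subset_filter _ (Finset.subset_univ S)
  obtain ⟨U, hU, hcard⟩ := exists_isCertificate_card_le hs hD a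
  exact ⟨U, hU, hcard.trans_eq (by ring)⟩

end Certificate

/-! ### Hashing -/

section Hashing

variable {ι β : Type*} [Fintype ι] [Fintype β]

lemma card_collision_mul_card_le [DecidableEq ι] [DecidableEq β] {j j' : ι} (hj : j ≠ j') :
    ({h | h j = h j'} : Finset (ι → β)).card * Fintype.card β ≤
      Fintype.card β ^ Fintype.card ι := by
  have hinv : Set.LeftInvOn (fun w : ι → β => (Function.update w j (w j'), w j))
      (fun p : (ι → β) × β => Function.update p.1 j p.2)
      (({h | h j = h j'} : Finset (ι → β)) ×ˢ (Finset.univ : Finset β) : Finset _) := by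
    rintro ⟨g, b⟩ hg
    have hg : g j = g j' := by simpa using hg
    simp [hj.symm, ← hg]
  simpa using Finset.card_le_card_of_injOn (t := Finset.univ) _
    (fun _ _ => Finset.mem_coe.2 (Finset.mem_univ _)) hinv.injOn

lemma card_pow_card_le_two_mul_card_injOn [DecidableEq ι] [Nonempty β] {D : Finset ι}
    (hD : 2 * D.card ^ 2 ≤ Fintype.card β) :
    Fintype.card β ^ Fintype.card ι ≤
      2 * ({h | Set.InjOn h (D : Set ι)} : Finset (ι → β)).card := by
  let collide (p : ι × ι) : Finset (ι → β) := {h | h p.1 = h p.2}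
  have hcover : ({h | ¬ Set.InjOn h (D : Set ι)} : Finset (ι → β)) ⊆ D.offDiag.biUnion collide := by
    intro h hh
    simp only [Finset.mem_filter, Finset.mem_univ, true_and, Set.InjOn, not_forall] at hh
    obtain ⟨j, hj, j', hj', heq, hne⟩ := hh
    exact Finset.mem_biUnion.2
      ⟨(j, j'), Finset.mem_offDiag.2 ⟨hj, hj', hne⟩, Finset.mem_filter.2 ⟨Finset.mem_univ _, heq⟩⟩
  have hbad : ({h | ¬ Set.InjOn h (D : Set ι)} : Finset (ι → β)).card * Fintype.card β ≤
      D.card ^ 2 * Fintype.card β ^ Fintype.card ι := by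
    calc _ ≤ (∑ p ∈ D.offDiag, (collide p).card) * Fintype.card β :=
          Nat.mul_le_mul_right _ ((Finset.card_le_card hcover).trans Finset.card_biUnion_le)
      _ ≤ D.offDiag.card * Fintype.card β ^ Fintype.card ι := by
          rw [Finset.sum_mul, ← smul_eq_mul (D.offDiag.card)]
          exact Finset.sum_le_card_nsmul _ _ _ fun p hp =>
            card_collision_mul_card_le (Finset.mem_offDiag.1 hp).2.2
      _ ≤ D.card ^ 2 * Fintype.card β ^ Fintype.card ι := by
          rw [Finset.offDiag_card, sq]
          exact Nat.mul_le_mul_right _ (Nat.sub_le _ _)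
  have hhalf : 2 * ({h | ¬ Set.InjOn h (D : Set ι)} : Finset (ι → β)).card ≤
      Fintype.card β ^ Fintype.card ι := by
    refine Nat.le_of_mul_le_mul_right ?_ (Fintype.card_pos (α := β))
    calc _ ≤ 2 * (D.card ^ 2 * Fintype.card β ^ Fintype.card ι) := by
          rw [mul_assoc]
          exact Nat.mul_le_mul_left 2 hbad
      _ ≤ Fintype.card β ^ Fintype.card ι * Fintype.card β := by
          rw [← mul_assoc, mul_comm]
          exact Nat.mul_le_mul_left _ hD
  have htotal := Finset.card_filter_add_card_filter_not (s := (Finset.univ : Finset (ι → β)))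
    (fun h => Set.InjOn h (D : Set ι))
  rw [Finset.card_univ, Fintype.card_fun] at htotal
  omega

lemma exists_card_le_two_mul_card_injOn {ι β κ : Type*} [Finite ι] [Fintype β] [Nonempty β]
    [Fintype κ] {D : κ → Finset ι}
    (hD : ∀ k, 2 * (D k).card ^ 2 ≤ Fintype.card β) :
    ∃ h : ι → β,
      Fintype.card κ ≤ 2 * ({k | Set.InjOn h (D k : Set ι)} : Finset κ).card := by
  have := Fintype.ofFinite ι
  have hcount : ∑ h : ι → β, 2 * ({k | Set.InjOn h (D k : Set ι)} : Finset κ).card =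
      ∑ k, 2 * ({h | Set.InjOn h (D k : Set ι)} : Finset (ι → β)).card := by
    simp only [Finset.card_filter, Finset.mul_sum]
    exact Finset.sum_comm
  have hsum : ∑ _h : ι → β, Fintype.card κ ≤
      ∑ h : ι → β, 2 * ({k | Set.InjOn h (D k : Set ι)} : Finset κ).card := by
    rw [hcount, Finset.sum_const, Finset.card_univ, Fintype.card_fun, smul_eq_mul, mul_comm,
      ← smul_eq_mul, ← Finset.card_univ]
    exact Finset.card_nsmul_le_sum _ _ _ fun k _ => card_pow_card_le_two_mul_card_injOn (hD k)
  obtain ⟨h, -, hh⟩ := Finset.exists_le_of_sum_le Finset.univ_nonempty hsum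
  exact ⟨h, hh⟩

lemma exists_card_le_mul_card_fiber {β κ : Type*} [Fintype β] [Nonempty β] [DecidableEq β]
    (G : Finset κ) (h : κ → β) :
    ∃ u, G.card ≤ Fintype.card β * {i ∈ G | h i = u}.card := by
  have hsum : ∑ _u : β, G.card ≤ ∑ u, Fintype.card β * {i ∈ G | h i = u}.card := by
    rw [← Finset.mul_sum, ← Finset.card_eq_sum_card_fiberwise fun _ _ =>
      Finset.mem_coe.2 (Finset.mem_univ _)]
    simp
  obtain ⟨u, -, hu⟩ := Finset.exists_le_of_sum_le Finset.univ_nonempty hsum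
  exact ⟨u, hu⟩

end Hashing

/-! ### Restriction to an addressing function -/

section Addressing

variable {ι : Type} {β : Type*}

/-- The point whose coordinates in `T` are the bits of `z` and whose remaining coordinates are
looked up in the table `y` through the hash function `h`. -/
noncomputable def hybrid (h : ι → β) (T : Finset ι) (z : T → Bool) (y : β → Bool) : ι → Bool :=
  fun j => if hj : j ∈ T then z ⟨j, hj⟩ else y (h j)

lemma IsCertificate.eq_xor {f : (ι → Bool) → Bool} {a x : ι → Bool} {U₀ U₁ : Finset ι} {i : ι}
    (h₀ : IsCertificate f a U₀) (h₁ : IsCertificate f (flipOn a {i}) U₁)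
    (hi : f (flipOn a {i}) ≠ f a) (hx : ∀ j ∈ U₀ ∪ U₁, j ≠ i → x j = a j) :
    f x = (f a ^^ a i ^^ x i) := by
  by_cases hxi : x i = a i
  · have hfx : f x = f a := by
      refine h₀ x fun j hj => ?_
      rcases eq_or_ne j i with rfl | hji
      · exact hxi
      · exact hx j (Finset.mem_union_left _ hj) hji
    simp [hfx, hxi]
  · have hfx : f x = f (flipOn a {i}) := by
      refine h₁ x fun j hj => ?_
      rcases eq_or_ne j i with rfl | hji
      · rw [flipOn_apply_of_mem a (Finset.mem_singleton_self j)]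
        exact Bool.eq_not.2 hxi
      · rw [flipOn_apply_of_notMem a (Finset.notMem_singleton.2 hji)]
        exact hx j (Finset.mem_union_right _ hj) hji
    rw [hfx, Bool.eq_not.2 hi, Bool.eq_not.2 hxi]
    simp

lemma exists_table_eqOn {h : ι → β} {D : Finset ι} (hD : Set.InjOn h D) (a : ι → Bool) :
    ∃ y : β → Bool, ∀ j ∈ D, y (h j) = a j := by
  cases isEmpty_or_nonempty ι
  · exact ⟨fun _ => false, isEmptyElim⟩
  · exact ⟨a ∘ Function.invFunOn h D, fun j hj => congrArg a (hD.leftInvOn_invFunOn hj)⟩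

theorem exists_hybrid_eq [Fintype ι] [Fintype β] [Nonempty β] {f : (ι → Bool) → Bool}
    (hf : TrulyVariate f) {c : ℕ} (hcert : ∀ a, ∃ U, IsCertificate f a U ∧ U.card ≤ c)
    (hβ : 2 * (2 * c) ^ 2 ≤ Fintype.card β) :
    ∃ (h : ι → β) (T : Finset ι) (Y : T → β → Bool) (σ : T → Bool),
      Fintype.card ι ≤ 2 * (Fintype.card β * T.card) ∧
        ∀ i (z : T → Bool), f (hybrid h T (fun j => σ j ^^ z j) (Y i)) = z i := by
  simp only [TrulyVariate, update_not_eq_flipOn] at hf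
  choose a ha using hf
  choose U hU hUc using hcert
  let D (i : ι) : Finset ι := U (a i) ∪ U (flipOn (a i) {i})
  have hDc (i : ι) : (D i).card ≤ 2 * c :=
    (Finset.card_union_le _ _).trans ((add_le_add (hUc _) (hUc _)).trans_eq (two_mul c).symm)
  obtain ⟨h, hh⟩ := exists_card_le_two_mul_card_injOn (β := β) (D := D) fun i =>
    (Nat.mul_le_mul_left 2 (Nat.pow_le_pow_left (hDc i) 2)).trans hβ
  obtain ⟨u, hu⟩ := exists_card_le_mul_card_fiber {i | Set.InjOn h (D i : Set ι)} h
  set T : Finset ι := {i ∈ ({i | Set.InjOn h (D i : Set ι)} : Finset ι) | h i = u}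
  have hinj (i : T) : Set.InjOn h (D i : Set ι) :=
    (Finset.mem_filter.1 (Finset.mem_filter.1 i.2).1).2
  have hbucket (i : T) : h i = u := (Finset.mem_filter.1 i.2).2
  choose Y hY using fun i : T => exists_table_eqOn (hinj i) (a i)
  refine ⟨h, T, Y, fun i => f (a i) ^^ a i i, hh.trans (Nat.mul_le_mul_left 2 hu), fun i z => ?_⟩
  have hiD : (i : ι) ∈ D i := Finset.mem_union_left _ ((hU (a i)).mem_of_flipOn_ne (ha i))
  rw [(hU (a i)).eq_xor (hU (flipOn (a i) {(i : ι)})) (ha i)]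
  · rw [hybrid, dif_pos i.2, ← Bool.xor_assoc, Bool.xor_self, Bool.false_xor]
  · intro j hj hji
    have hjT : j ∉ T := fun hjT =>
      hji (hinj i hj hiD ((hbucket ⟨j, hjT⟩).trans (hbucket i).symm))
    rw [hybrid, dif_neg hjT, hY i j hj]

end Addressing

/-! ### Functions spanned by low-degree polynomials -/

section LowDegreeSpan

open scoped Pointwise

lemma prod_pow_mem_pow_sum {R A ι : Type*} [CommSemiring R] [CommSemiring A] [Algebra R A]
    {V : Submodule R A} {x : ι → A} (hx : ∀ j, x j ∈ V) (s : Finset ι) (e : ι → ℕ) :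
    ∏ j ∈ s, x j ^ e j ∈ V ^ ∑ j ∈ s, e j := by
  induction s using Finset.cons_induction with
  | empty => simpa using Submodule.one_le.1 (le_refl (1 : Submodule R A))
  | cons j s hj ih =>
    rw [Finset.prod_cons, Finset.sum_cons, pow_add]
    exact Submodule.mul_mem_mul (Submodule.pow_mem_pow V (hx j) _) ih

lemma aeval_mem_pow {R A ι : Type*} [CommSemiring R] [CommSemiring A] [Algebra R A]
    {V : Submodule R A} (hone : 1 ∈ V) {x : ι → A} (hx : ∀ j, x j ∈ V) {P : MvPolynomial ι R}
    {d : ℕ} (hP : P.totalDegree ≤ d) : MvPolynomial.aeval x P ∈ V ^ d := by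
  rw [MvPolynomial.aeval_eq_eval₂Hom, MvPolynomial.coe_eval₂Hom, MvPolynomial.eval₂_eq]
  refine Submodule.sum_mem _ fun e he => ?_
  rw [← Algebra.smul_def]
  exact Submodule.smul_mem _ _ (pow_le_pow_right' (Submodule.one_le.2 hone)
    ((MvPolynomial.le_totalDegree he).trans hP) (prod_pow_mem_pow_sum hx e.support e))

lemma finrank_span_pow_le {K A : Type*} [Field K] [CommRing A] [Algebra K A] (s : Finset A)
    (d : ℕ) : Module.finrank K ↥(Submodule.span K (s : Set A) ^ d) ≤ s.card ^ d := by
  rw [Submodule.span_pow, ← Finset.coe_pow]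
  exact (finrank_span_finset_le_card _).trans Finset.card_pow_le

lemma aeval_eq_evalBool {ι : Type} {τ : Type*} (x : τ → ι → Bool) (P : MvPolynomial ι ℝ) :
    MvPolynomial.aeval (fun j i => if x i j then (1 : ℝ) else 0) P =
      fun i => evalBool (x i) P :=
  funext fun i => MvPolynomial.comp_aeval_apply _ (Pi.evalAlgHom ℝ (fun _ => ℝ) i) P

lemma exists_submodule_evalBool_hybrid_mem {ι : Type} {β τ : Type*} [Fintype β] (h : ι → β)
    (T : Finset ι) (Y : τ → β → Bool) (d : ℕ) :
    ∃ V : Submodule ℝ (τ → ℝ), Module.finrank ℝ V ≤ (Fintype.card β + 1) ^ d ∧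
      ∀ (z : T → Bool) (P : MvPolynomial ι ℝ), P.totalDegree ≤ d →
        (fun i => evalBool (hybrid h T z (Y i)) P) ∈ V := by
  let lookup (b : β) : τ → ℝ := fun i => if Y i b then 1 else 0
  let s : Finset (τ → ℝ) := insert 1 (Finset.univ.image lookup)
  have hone : 1 ∈ Submodule.span ℝ (s : Set (τ → ℝ)) :=
    Submodule.subset_span (Finset.mem_insert_self _ _)
  refine ⟨Submodule.span ℝ (s : Set (τ → ℝ)) ^ d, (finrank_span_pow_le s d).trans ?_,
    fun z P hP => ?_⟩
  · exact Nat.pow_le_pow_left ((Finset.card_insert_le _ _).trans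
      (Nat.succ_le_succ Finset.card_image_le)) d
  · rw [← aeval_eq_evalBool]
    refine aeval_mem_pow hone (fun j => ?_) hP
    by_cases hj : j ∈ T
    · convert Submodule.smul_mem _ (if z ⟨j, hj⟩ then (1 : ℝ) else 0) hone using 1
      ext i
      simp [hybrid, hj]
    · have hlookup : lookup (h j) ∈ Submodule.span ℝ (s : Set (τ → ℝ)) := Submodule.subset_span
        (Finset.mem_insert_of_mem (Finset.mem_image_of_mem _ (Finset.mem_univ _)))
      convert hlookup using 1
      ext i
      simp [lookup, hybrid, hj]

end LowDegreeSpan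

/-! ### Vapnik–Chervonenkis dimension -/

section VapnikChervonenkis

variable {τ : Type*}

lemma exists_ne_zero_forall_sum_mul_eq_zero {K : Type*} [Field K] {V : Submodule K (τ → K)}
    [FiniteDimensional K V] {S : Finset τ} (hV : Module.finrank K V < S.card) :
    ∃ l : τ → K, (∃ i ∈ S, l i ≠ 0) ∧ ∀ v ∈ V, ∑ i ∈ S, v i * l i = 0 := by
  let W : Submodule K (S → K) := V.map (LinearMap.funLeft K K Subtype.val)
  have hW : W < ⊤ := by
    refine Submodule.lt_top_of_finrank_lt_finrank ?_
    rw [Module.finrank_fintype_fun_eq_card, Fintype.card_coe]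
    exact (Submodule.finrank_map_le _ _).trans_lt hV
  obtain ⟨φ, hφ, hWφ⟩ := Submodule.exists_le_ker_of_lt_top W hW
  let l (i : τ) : K := φ fun j => if i = j then 1 else 0
  have apply_eq (x : τ → K) : φ (fun i => x i) = ∑ i ∈ S, x i * l i := by
    rw [LinearMap.pi_apply_eq_sum_univ φ, ← Finset.sum_coe_sort S]
    simp only [l, Subtype.ext_iff, smul_eq_mul]
  refine ⟨l, ?_, fun v hv => ?_⟩
  · by_contra! hl
    refine hφ (LinearMap.ext fun x => ?_)
    rw [LinearMap.pi_apply_eq_sum_univ φ x]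
    refine Finset.sum_eq_zero fun i _ => ?_
    have := hl i i.2
    simp only [l, ← Subtype.ext_iff] at this
    rw [this, smul_zero]
  · rw [← apply_eq]
    exact hWφ (Submodule.mem_map_of_mem hv)

theorem card_le_finrank_of_shatters {V : Submodule ℝ (τ → ℝ)} [FiniteDimensional ℝ V] {g : τ → ℝ}
    {𝒜 : Finset (Finset τ)} (h𝒜 : ∀ B ∈ 𝒜, ∃ v ∈ V, ∀ i, i ∈ B ↔ g i < v i) {S : Finset τ}
    (hS : 𝒜.Shatters S) : S.card ≤ Module.finrank ℝ V := by
  by_contra! hlt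
  obtain ⟨l, ⟨i₀, hi₀, hl₀⟩, hl⟩ := exists_ne_zero_forall_sum_mul_eq_zero hlt
  wlog hsign : 0 < ∑ i ∈ S, g i * l i ∨ (∑ i ∈ S, g i * l i = 0 ∧ 0 < l i₀) generalizing l
  · refine this (-l) (fun v hv => by simpa using hl v hv) (by simpa using hl₀) ?_
    simp only [Pi.neg_apply, mul_neg, Finset.sum_neg_distrib, Left.neg_pos_iff, neg_eq_zero]
    grind
  obtain ⟨B, hB, hSB⟩ := hS (t := {i ∈ S | 0 < l i}) (Finset.filter_subset _ _)
  obtain ⟨v, hv, hBv⟩ := h𝒜 B hB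
  have hpos {i : τ} (hi : i ∈ S) : 0 < l i ↔ g i < v i := by
    rw [← hBv, ← and_iff_right (a := i ∈ S) (b := i ∈ B) hi, ← Finset.mem_inter, hSB]
    simp [hi]
  have hterm : ∀ i ∈ S, 0 ≤ (v i - g i) * l i := fun i hi => by
    rcases lt_or_ge 0 (l i) with h | h
    · exact mul_nonneg (sub_nonneg.2 ((hpos hi).1 h).le) h.le
    · exact mul_nonneg_of_nonpos_of_nonpos
        (sub_nonpos.2 (not_lt.1 (mt (hpos hi).2 h.not_gt))) h
  have hsum : ∑ i ∈ S, (v i - g i) * l i = -∑ i ∈ S, g i * l i := by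
    simp only [sub_mul, Finset.sum_sub_distrib, hl v hv, zero_sub]
  rcases hsign with hg | ⟨hg, hl₀⟩
  · linarith [Finset.sum_nonneg hterm]
  · have : 0 < ∑ i ∈ S, (v i - g i) * l i :=
      Finset.sum_pos' hterm ⟨i₀, hi₀, mul_pos (sub_pos.2 ((hpos hi₀).1 hl₀)) hl₀⟩
    linarith

lemma sum_range_choose_le_succ_pow (n k : ℕ) :
    ∑ j ∈ Finset.range (k + 1), n.choose j ≤ (n + 1) ^ k := by
  rw [add_pow]
  refine Finset.sum_le_sum fun j hj => ?_
  rw [one_pow, mul_one]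
  exact (Nat.choose_le_pow n j).trans
    (Nat.le_mul_of_pos_right _ (Nat.choose_pos (Finset.mem_range_succ_iff.1 hj)))

variable [Fintype τ]

lemma card_le_succ_pow_of_forall_shatters {𝒜 : Finset (Finset τ)} {k : ℕ}
    (h𝒜 : ∀ S, 𝒜.Shatters S → S.card ≤ k) : 𝒜.card ≤ (Fintype.card τ + 1) ^ k := by
  have hvc : 𝒜.vcDim ≤ k := Finset.sup_le fun S hS => h𝒜 S (Finset.mem_shatterer.1 hS)
  calc 𝒜.card ≤ ∑ j ∈ Finset.Iic 𝒜.vcDim, (Fintype.card τ).choose j :=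
        𝒜.card_le_card_shatterer.trans Finset.card_shatterer_le_sum_vcDim
    _ ≤ ∑ j ∈ Finset.range (k + 1), (Fintype.card τ).choose j :=
        Finset.sum_le_sum_of_subset fun j hj =>
          Finset.mem_range_succ_iff.2 ((Finset.mem_Iic.1 hj).trans hvc)
    _ ≤ (Fintype.card τ + 1) ^ k := sum_range_choose_le_succ_pow _ k

theorem card_le_succ_pow_finrank {V : Submodule ℝ (τ → ℝ)} {g : τ → ℝ} {𝒜 : Finset (Finset τ)}
    (h𝒜 : ∀ B ∈ 𝒜, ∃ v ∈ V, ∀ i, i ∈ B ↔ g i < v i) :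
    𝒜.card ≤ (Fintype.card τ + 1) ^ Module.finrank ℝ V :=
  card_le_succ_pow_of_forall_shatters fun _ => card_le_finrank_of_shatters h𝒜

end VapnikChervonenkis

/-! ### Agreement of a low-dimensional space with all sign patterns -/

section Agreement

variable {τ : Type*} [Fintype τ] [DecidableEq τ]

lemma sum_exp_sum_boolSign_mul_le (a : τ → ℝ) :
    ∑ z : τ → Bool, Real.exp (∑ i, boolSign (z i) * a i) ≤
      2 ^ Fintype.card τ * Real.exp ((∑ i, a i ^ 2) / 2) := by
  calc ∑ z : τ → Bool, Real.exp (∑ i, boolSign (z i) * a i)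
      = ∏ i, ∑ b, Real.exp (boolSign b * a i) := by
        simp only [Real.exp_sum]
        exact (Fintype.prod_sum fun i b => Real.exp (boolSign b * a i)).symm
    _ = ∏ i, 2 * Real.cosh (a i) := by
        refine Finset.prod_congr rfl fun i _ => ?_
        rw [Fintype.sum_bool, Real.cosh_eq]
        simp [boolSign]
        ring
    _ ≤ ∏ i, 2 * Real.exp (a i ^ 2 / 2) :=
        Finset.prod_le_prod (fun i _ => (mul_pos two_pos (Real.cosh_pos _)).le) fun i _ =>
          mul_le_mul_of_nonneg_left (Real.cosh_le_exp_half_sq _) zero_le_two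
    _ = 2 ^ Fintype.card τ * Real.exp ((∑ i, a i ^ 2) / 2) := by
        rw [Finset.prod_mul_distrib, Finset.prod_const, Finset.card_univ, ← Real.exp_sum,
          ← Finset.sum_div]

/-- Massart's finite class lemma. -/
theorem mul_sum_boolSign_mul_le {κ : Type*} {𝒜 : Finset κ} {a : κ → τ → ℝ} {r : ℝ}
    (hr : ∀ k ∈ 𝒜, ∑ i, a k i ^ 2 ≤ r) {k : (τ → Bool) → κ} (hk : ∀ z, k z ∈ 𝒜) (t : ℝ) :
    t * ∑ z, ∑ i, boolSign (z i) * a (k z) i ≤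
      2 ^ Fintype.card τ * (Real.log 𝒜.card + t ^ 2 * r / 2) := by
  set L : ℝ := Real.log 𝒜.card + t ^ 2 * r / 2
  let X (k : κ) (z : τ → Bool) : ℝ := ∑ i, boolSign (z i) * (t * a k i)
  have hcard : (0 : ℝ) < 𝒜.card := Nat.cast_pos.2 (Finset.card_pos.2 ⟨_, hk fun _ => false⟩)
  have hmgf : ∀ j ∈ 𝒜, ∑ z, Real.exp (X j z) ≤
      2 ^ Fintype.card τ * Real.exp (t ^ 2 * r / 2) := fun j hj => by
    refine (sum_exp_sum_boolSign_mul_le _).trans ?_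
    simp only [mul_pow, ← Finset.mul_sum]
    gcongr
    exact hr j hj
  have hupper : ∑ z, Real.exp (X (k z) z) ≤ 2 ^ Fintype.card τ * Real.exp L := by
    calc ∑ z, Real.exp (X (k z) z) ≤ ∑ z, ∑ j ∈ 𝒜, Real.exp (X j z) :=
          Finset.sum_le_sum fun z _ => Finset.single_le_sum
            (f := fun j => Real.exp (X j z)) (fun _ _ => (Real.exp_pos _).le) (hk z)
      _ ≤ 𝒜.card * (2 ^ Fintype.card τ * Real.exp (t ^ 2 * r / 2)) := by
          rw [Finset.sum_comm, ← nsmul_eq_mul]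
          exact Finset.sum_le_card_nsmul _ _ _ hmgf
      _ = 2 ^ Fintype.card τ * Real.exp L := by
          rw [Real.exp_add, Real.exp_log hcard]
          ring
  -- tangent line of `exp` at `L`
  have hlower : Real.exp L * ∑ z, (X (k z) z - L + 1) ≤ ∑ z, Real.exp (X (k z) z) := by
    rw [Finset.mul_sum]
    refine Finset.sum_le_sum fun z _ => ?_
    calc Real.exp L * (X (k z) z - L + 1) ≤ Real.exp L * Real.exp (X (k z) z - L) :=
          mul_le_mul_of_nonneg_left (Real.add_one_le_exp _) (Real.exp_pos _).le
      _ = Real.exp (X (k z) z) := by rw [← Real.exp_add, add_sub_cancel]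
  have hmean : ∑ z, (X (k z) z - L + 1) ≤ 2 ^ Fintype.card τ :=
    le_of_mul_le_mul_left ((hlower.trans hupper).trans_eq (mul_comm _ _)) (Real.exp_pos L)
  have hX : t * ∑ z, ∑ i, boolSign (z i) * a (k z) i = ∑ z, X (k z) z := by
    simp only [X, Finset.mul_sum, mul_left_comm t]
  simp only [Finset.sum_add_distrib, Finset.sum_sub_distrib, Finset.sum_const, Finset.card_univ,
    Fintype.card_fun, Fintype.card_bool, nsmul_eq_mul, Nat.cast_pow, Nat.cast_ofNat, mul_one]
    at hmean
  linarith

lemma two_mul_ite_sub_one_le_boolSign_mul (b : Bool) (y : ℝ) :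
    2 * (if y = if b then 1 else 0 then 1 else 0) - 1 ≤
      boolSign b * boolSign (decide (1 / 2 < y)) := by
  by_cases h : y = if b then 1 else 0
  · have : decide (1 / 2 < y) = b := by
      rw [h]
      cases b <;> norm_num
    rw [if_pos h, this, boolSign_mul_self]
    norm_num
  · have := neg_abs_le (boolSign b * boolSign (decide (1 / 2 < y)))
    rw [abs_mul, abs_boolSign, abs_boolSign] at this
    rw [if_neg h]
    linarith

theorem two_mul_sq_mul_card_le_of_agree {V : Submodule ℝ (τ → ℝ)} {v : (τ → Bool) → τ → ℝ}
    (hv : ∀ z, v z ∈ V) {δ : ℝ} (hδ : 0 ≤ δ)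
    (hagree : (1 / 2 + δ) * Fintype.card ((τ → Bool) × τ) ≤
      ({p | v p.1 p.2 = if p.1 p.2 then 1 else 0} : Finset ((τ → Bool) × τ)).card) :
    2 * δ ^ 2 * Fintype.card τ ≤ Module.finrank ℝ V * Real.log (Fintype.card τ + 1) := by
  let B (z : τ → Bool) : Finset τ := {i | 1 / 2 < v z i}
  let 𝒜 : Finset (Finset τ) := Finset.univ.image B
  let a (S : Finset τ) (i : τ) : ℝ := boolSign (decide (i ∈ S))
  have hB (z : τ → Bool) : B z ∈ 𝒜 := Finset.mem_image_of_mem B (Finset.mem_univ z)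
  have h𝒜 : 𝒜.card ≤ (Fintype.card τ + 1) ^ Module.finrank ℝ V := by
    refine card_le_succ_pow_finrank (g := fun _ => 1 / 2) fun S hS => ?_
    obtain ⟨z, -, rfl⟩ := Finset.mem_image.1 hS
    exact ⟨v z, hv z, fun i => by simp [B]⟩
  have hlog : Real.log 𝒜.card ≤ Module.finrank ℝ V * Real.log (Fintype.card τ + 1) := by
    rw [← Real.log_pow]
    exact Real.log_le_log (Nat.cast_pos.2 (Finset.card_pos.2 ⟨_, hB fun _ => false⟩))
      (by exact_mod_cast h𝒜)
  have hcorr : 2 * δ * (2 ^ Fintype.card τ * Fintype.card τ) ≤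
      ∑ z, ∑ i, boolSign (z i) * a (B z) i := by
    have := Finset.sum_le_sum fun (p : (τ → Bool) × τ) (_ : p ∈ Finset.univ) =>
      two_mul_ite_sub_one_le_boolSign_mul (p.1 p.2) (v p.1 p.2)
    rw [Finset.sum_sub_distrib, ← Finset.mul_sum, Finset.sum_boole, Finset.sum_const,
      Finset.card_univ, Fintype.sum_prod_type] at this
    rw [nsmul_eq_mul, mul_one] at this
    rw [Fintype.card_prod, Fintype.card_fun, Fintype.card_bool, Nat.cast_mul, Nat.cast_pow,
      Nat.cast_ofNat] at hagree this
    simp only [a, B, Finset.mem_filter, Finset.mem_univ, true_and]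
    linarith
  have hmassart := mul_sum_boolSign_mul_le (𝒜 := 𝒜) (a := a) (r := Fintype.card τ)
    (fun S _ => by simp [a, sq, boolSign_mul_self]) hB (2 * δ)
  have hpow : (0 : ℝ) < 2 ^ Fintype.card τ := by positivity
  refine le_trans ?_ hlog
  refine le_of_mul_le_mul_left ?_ hpow
  have := mul_le_mul_of_nonneg_left hcorr (mul_nonneg zero_le_two hδ)
  linarith

lemma log_add_one_le_two_mul_sqrt {x : ℝ} (hx : 0 ≤ x) : Real.log (x + 1) ≤ 2 * √x := by
  have hsqrt : 0 < √x + 1 := by positivity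
  calc Real.log (x + 1) ≤ Real.log ((√x + 1) ^ 2) := by
        refine Real.log_le_log (by positivity) ?_
        linarith [Real.sq_sqrt hx, Real.sqrt_nonneg x, add_sq (√x) 1]
    _ = 2 * Real.log (√x + 1) := by rw [Real.log_pow, Nat.cast_ofNat]
    _ ≤ 2 * √x := by linarith [Real.log_le_sub_one_of_pos hsqrt]

lemma le_four_mul_sq_of_le_mul_log {x c : ℝ} (hx : 0 ≤ x) (hc : 0 ≤ c)
    (h : x ≤ c * Real.log (x + 1)) : x ≤ 4 * c ^ 2 := by
  have hle : x ≤ c * (2 * √x) :=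
    h.trans (mul_le_mul_of_nonneg_left (log_add_one_le_two_mul_sqrt hx) hc)
  have amgm : 2 * (2 * c) * √x ≤ (2 * c) ^ 2 + √x ^ 2 := two_mul_le_add_sq _ _
  rw [Real.sq_sqrt hx] at amgm
  linarith

end Agreement

/-! ### Probabilistic degree -/

section ProbabilisticDegree

variable {ι : Type} {β : Type*} [Fintype β] {f : (ι → Bool) → Bool} {ε : ℝ} {d : ℕ}

theorem HasProbPoly.pow_four_mul_card_le (hf : HasProbPoly f ε d) (hε : ε < 1 / 2)
    {h : ι → β} {T : Finset ι} {Y : T → β → Bool} {σ : T → Bool}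
    (hT : ∀ i (z : T → Bool), f (hybrid h T (fun j => σ j ^^ z j) (Y i)) = z i) :
    (1 / 2 - ε) ^ 4 * T.card ≤ ((Fintype.card β + 1 : ℝ) ^ d) ^ 2 := by
  set δ : ℝ := 1 / 2 - ε
  have hδ : 0 < δ := sub_pos.2 hε
  obtain ⟨P, hPd, hP⟩ := exists_card_agree_ge hf fun p : (T → Bool) × T =>
    hybrid h T (fun j => σ j ^^ p.1 j) (Y p.2)
  obtain ⟨V, hVrank, hV⟩ := exists_submodule_evalBool_hybrid_mem h T Y d
  simp only [hT] at hP
  rw [show 1 - ε = 1 / 2 + δ by ring] at hP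
  have hagree :=
    two_mul_sq_mul_card_le_of_agree (fun z => hV (fun j => σ j ^^ z j) P hPd) hδ.le hP
  rw [Fintype.card_coe] at hagree
  have hVrank : (Module.finrank ℝ V : ℝ) ≤ (Fintype.card β + 1 : ℝ) ^ d := by exact_mod_cast hVrank
  have hlog : (T.card : ℝ) ≤
      (Fintype.card β + 1 : ℝ) ^ d / (2 * δ ^ 2) * Real.log (T.card + 1) := by
    rw [div_mul_eq_mul_div, le_div_iff₀' (by positivity)]
    exact hagree.trans (mul_le_mul_of_nonneg_right hVrank (Real.log_nonneg (by simp)))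
  calc δ ^ 4 * T.card ≤ δ ^ 4 * (4 * ((Fintype.card β + 1 : ℝ) ^ d / (2 * δ ^ 2)) ^ 2) :=
        mul_le_mul_of_nonneg_left
          (le_four_mul_sq_of_le_mul_log (Nat.cast_nonneg _) (by positivity) hlog) (by positivity)
    _ = ((Fintype.card β + 1 : ℝ) ^ d) ^ 2 := by
        field_simp
        norm_num

theorem HasProbPoly.pow_four_mul_card_le_of_certificates [Fintype ι] (hf : HasProbPoly f ε d)
    (hε : ε < 1 / 2) (hvar : TrulyVariate f) {c m : ℕ}
    (hcert : ∀ a, ∃ U, IsCertificate f a U ∧ U.card ≤ c) (hm : m ≠ 0) (hcm : 2 * (2 * c) ^ 2 ≤ m) :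
    (1 / 2 - ε) ^ 4 * Fintype.card ι ≤ 2 * m * ((m + 1 : ℝ) ^ d) ^ 2 := by
  have : NeZero m := ⟨hm⟩
  obtain ⟨h, T, Y, σ, hcard, hT⟩ :=
    exists_hybrid_eq (β := Fin m) hvar hcert (by rwa [Fintype.card_fin])
  have hcount := hf.pow_four_mul_card_le hε hT
  rw [Fintype.card_fin] at hcard hcount
  have hcard : (Fintype.card ι : ℝ) ≤ 2 * (m * T.card) := by exact_mod_cast hcard
  calc (1 / 2 - ε) ^ 4 * Fintype.card ι ≤ (1 / 2 - ε) ^ 4 * (2 * (m * T.card)) :=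
        mul_le_mul_of_nonneg_left hcard (by positivity)
    _ = 2 * m * ((1 / 2 - ε) ^ 4 * T.card) := by ring
    _ ≤ 2 * m * ((m + 1 : ℝ) ^ d) ^ 2 := mul_le_mul_of_nonneg_left hcount (by positivity)

theorem TrulyVariate.le_sensitivity_pow {n : ℕ} {f : (Fin n → Bool) → Bool} (hvar : TrulyVariate f)
    (hs : 2 ≤ sensitivity f) (hf : HasProbPoly f (1 / 3) d) :
    n ≤ sensitivity f ^ (25 + 28 * d) := by
  have hcount := hf.pow_four_mul_card_le_of_certificates (by norm_num) hvar
    (exists_isCertificate_card_le_sensitivity_pow f) (m := 8 * sensitivity f ^ 10)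
    (by positivity) (by apply le_of_eq; ring)
  rw [Fintype.card_fin] at hcount
  set s := sensitivity f
  have hcount : n ≤ 20736 * s ^ 10 * ((8 * s ^ 10 + 1) ^ d) ^ 2 := by
    have : (n : ℝ) ≤ 20736 * s ^ 10 * ((8 * s ^ 10 + 1) ^ d) ^ 2 := by
      push_cast at hcount
      linarith
    exact_mod_cast this
  have hconst : 20736 ≤ s ^ 15 := le_trans (by norm_num) (Nat.pow_le_pow_left hs 15)
  have hbase : 8 * s ^ 10 + 1 ≤ s ^ 14 := by
    have hpow : 2 ^ 4 ≤ s ^ 4 := Nat.pow_le_pow_left hs 4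
    have hone : 1 ≤ s ^ 10 := Nat.one_le_pow _ _ (by omega)
    calc 8 * s ^ 10 + 1 ≤ 2 ^ 4 * s ^ 10 := by omega
      _ ≤ s ^ 4 * s ^ 10 := Nat.mul_le_mul_right _ hpow
      _ = s ^ 14 := (pow_add s 4 10).symm
  calc n ≤ 20736 * s ^ 10 * ((8 * s ^ 10 + 1) ^ d) ^ 2 := hcount
    _ ≤ s ^ 15 * s ^ 10 * ((s ^ 14) ^ d) ^ 2 := by gcongr
    _ = s ^ (25 + 28 * d) := by ring

end ProbabilisticDegree

theorem low_sensitivity_lower_bound :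
    ∃ a b : ℝ, 0 < a ∧ 0 < b ∧ ∀ n : ℕ, 2 ≤ n →
      ∀ f : (Fin n → Bool) → Bool, TrulyVariate f → 2 ≤ sensitivity f →
        a * (Real.logb 2 n - b * Real.logb 2 (sensitivity f)) /
            Real.logb 2 (sensitivity f)
          ≤ (pdeg (1/3) f : ℝ) := by
  refine ⟨1 / 28, 25, by norm_num, by norm_num, fun n hn f hvar hs => ?_⟩
  have hpow : (n : ℝ) ≤ (sensitivity f : ℝ) ^ (25 + 28 * pdeg (1 / 3) f) := by
    exact_mod_cast hvar.le_sensitivity_pow hs (hasProbPoly_pdeg f (by norm_num))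
  have hlog_pos : 0 < Real.logb 2 (sensitivity f) :=
    Real.logb_pos one_lt_two (Nat.one_lt_cast.2 hs)
  have hlog : Real.logb 2 n ≤ (25 + 28 * pdeg (1 / 3) f) * Real.logb 2 (sensitivity f) := by
    have := Real.logb_le_logb_of_le one_lt_two (Nat.cast_pos.2 (by omega)) hpow
    rw [Real.logb_pow] at this
    exact_mod_cast this
  rw [div_le_iff₀ hlog_pos]
  linarith
end

section
/- There exist absolute constants C ≥ 1 and k ≥ 1 such that the following holds. Let f : {0,1}^n → {0,1} be truly n-variate with sensitivity s ≥ 2. Then there exist positive integers r and t with r ≤ C·s^k and t ≥ n/(C·s^k), and a projection ν : [n] → [r+t], such that the projected function g = f|_ν : {0,1}^r × {0,1}^t → {0,1} (inputs split into the first r coordinates y and the last t coordinates z) has the following property: for every j ∈ [t] there exists a^{(j)} ∈ {0,1}^r such that either g(a^{(j)}, b) = b_j for all b ∈ {0,1}^t, or g(a^{(j)}, b) = 1 − b_j for all b ∈ {0,1}^t. -/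
open scoped Classical

/-!
Encode the answers of `f` as signs. By Huang's theorem, every set of more than half of the vertices
of a cube of dimension `m` contains a vertex with at least `√m` neighbours in the set, and this
forces `deg f ≤ s ^ 2`. If `f` at some point is changed by flipping any one of `m` disjoint blocks,
then averaging over the number of flipped blocks produces a polynomial of degree at most `deg f`
that is bounded by `1` at `0, …, m` and jumps by `2` between `0` and `1`. A finite-difference
argument at the points `4 k ^ 2` then shows `m ≤ 4 * (deg f) ^ 2 ≤ 4 * s ^ 4`.

Minimal blocks have size at most `s`, and the union of a maximal disjoint family of them is a
certificate, so every point has a certificate of size at most `4 * s ^ 5`. Two certificates, at the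
ends of an edge in direction `i` on which `f` changes, show that fixing at most `8 * s ^ 5` other
variables turns `f` into the literal of `i`.

Now colour the variables at random with `O(s ^ 10)` colours. For half of the variables `i`, the set
consisting of `i` and its fixed variables receives distinct colours. Let `T` be the most popular
colour class among those `i`. The variables in `T` stay free and all the others are merged according
to their colour: fixing the variables attached to `i ∈ T` touches neither `T` nor the same colour
twice, so it can be done by choosing the values of the colours.
-/

namespace BooleanCube

open Finset Function
open scoped symmDiff

section Huang

variable {ι : Type*} [DecidableEq ι]

lemma neg_one_pow_card_symmDiff_singleton {R : Type*} [Monoid R] [HasDistribNeg R]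
    (T : Finset ι) (i : ι) : (-1 : R) ^ #(T ∆ {i}) = -(-1) ^ #T := by
  by_cases hi : i ∈ T
  · have h : T ∆ {i} = T.erase i := by
      ext j; simp only [mem_symmDiff, mem_singleton, mem_erase]; grind
    rw [h, ← card_erase_add_one hi, pow_succ, mul_neg_one, neg_neg]
  · have h : T ∆ {i} = insert i T := by
      ext j; simp only [mem_symmDiff, mem_singleton, mem_insert]; grind
    rw [h, card_insert_of_notMem hi, pow_succ, mul_neg_one]

/-- The sign that Huang's signed adjacency matrix puts on the edge of the cube `Finset ι` leaving
`T` in direction `i`. The well-order only serves to fix an order of the coordinates. -/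
noncomputable def edgeSign (i : ι) (T : Finset ι) : ℝ :=
  (-1) ^ #{j ∈ T | WellOrderingRel j i}

omit [DecidableEq ι] in
lemma abs_edgeSign (i : ι) (T : Finset ι) : |edgeSign i T| = 1 := by
  simp [edgeSign]

lemma edgeSign_symmDiff_of_rel {i j : ι} (h : WellOrderingRel j i) (T : Finset ι) :
    edgeSign i (T ∆ {j}) = -edgeSign i T := by
  have hfilter : {k ∈ T ∆ {j} | WellOrderingRel k i} = {k ∈ T | WellOrderingRel k i} ∆ {j} := by
    ext k; simp only [mem_filter, mem_symmDiff, mem_singleton]; grind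
  rw [edgeSign, edgeSign, hfilter, neg_one_pow_card_symmDiff_singleton]

lemma edgeSign_symmDiff_of_not_rel {i j : ι} (h : ¬WellOrderingRel j i) (T : Finset ι) :
    edgeSign i (T ∆ {j}) = edgeSign i T := by
  have hfilter : {k ∈ T ∆ {j} | WellOrderingRel k i} = {k ∈ T | WellOrderingRel k i} := by
    ext k; simp only [mem_filter, mem_symmDiff, mem_singleton]; grind
  rw [edgeSign, edgeSign, hfilter]

lemma edgeSign_mul_edgeSign_symmDiff_self (i : ι) (T : Finset ι) :
    edgeSign i T * edgeSign i (T ∆ {i}) = 1 := by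
  rw [edgeSign_symmDiff_of_not_rel (irrefl i), ← abs_mul_abs_self, abs_edgeSign, one_mul]

-- The two ways around a square of the cube carry opposite signs.
lemma edgeSign_mul_edgeSign_symmDiff_comm {i j : ι} (hij : i ≠ j) (T : Finset ι) :
    edgeSign i T * edgeSign j (T ∆ {i}) = -(edgeSign j T * edgeSign i (T ∆ {j})) := by
  rcases trichotomous_of WellOrderingRel i j with h | rfl | h
  · rw [edgeSign_symmDiff_of_rel h, edgeSign_symmDiff_of_not_rel (asymm h)]; ring
  · exact absurd rfl hij
  · rw [edgeSign_symmDiff_of_rel h, edgeSign_symmDiff_of_not_rel (asymm h)]; ring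

variable [Fintype ι]

omit [DecidableEq ι] in
lemma sum_sum_eq_sum_diag_of_antisymm (a : ι → ι → ℝ) (ha : ∀ i j, i ≠ j → a i j = -a j i) :
    ∑ i, ∑ j, a i j = ∑ i, a i i := by
  have hdiag : ∀ i j, a i j + a j i = if i = j then 2 * a i i else 0 := by
    intro i j
    split_ifs with h
    · subst h; ring
    · rw [ha i j h, neg_add_cancel]
  have hdouble : ∑ i, ∑ j, a i j + ∑ i, ∑ j, a i j = 2 * ∑ i, a i i := by
    conv_lhs => rhs; rw [sum_comm]
    simp [← sum_add_distrib, hdiag, mul_sum]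
  linarith

/-- Huang's signed adjacency matrix of the cube `Finset ι`, as an operator. -/
noncomputable def signedAdjacency : (Finset ι → ℝ) →ₗ[ℝ] (Finset ι → ℝ) where
  toFun v T := ∑ i, edgeSign i T * v (T ∆ {i})
  map_add' v w := by ext T; simp [mul_add, sum_add_distrib]
  map_smul' c v := by ext T; simp [mul_sum, mul_left_comm]

lemma signedAdjacency_apply (v : Finset ι → ℝ) (T : Finset ι) :
    signedAdjacency v T = ∑ i, edgeSign i T * v (T ∆ {i}) := rfl

lemma signedAdjacency_signedAdjacency (v : Finset ι → ℝ) :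
    signedAdjacency (signedAdjacency v) = (Fintype.card ι : ℝ) • v := by
  ext T
  let a : ι → ι → ℝ := fun i j => edgeSign i T * edgeSign j (T ∆ {i}) * v (T ∆ {i} ∆ {j})
  calc signedAdjacency (signedAdjacency v) T = ∑ i, ∑ j, a i j := by
        simp only [signedAdjacency_apply, mul_sum, a, mul_assoc]
    _ = ∑ i, a i i := by
        refine sum_sum_eq_sum_diag_of_antisymm a fun i j hij => ?_
        simp only [a]
        rw [edgeSign_mul_edgeSign_symmDiff_comm hij, symmDiff_right_comm, neg_mul]
    _ = ∑ _i : ι, v T := by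
        simp only [a, edgeSign_mul_edgeSign_symmDiff_self, symmDiff_symmDiff_cancel_right, one_mul]
    _ = ((Fintype.card ι : ℝ) • v) T := by simp

-- Compare both sides of the eigenvalue equation at a point where `|u|` is largest.
lemma exists_mem_abs_eigenvalue_le_card_neighbors {H : Finset (Finset ι)} {u : Finset ι → ℝ}
    {μ : ℝ} (hu : u ≠ 0) (hsupp : ∀ T ∉ H, u T = 0) (heigen : signedAdjacency u = μ • u) :
    ∃ T ∈ H, |μ| ≤ #{i | T ∆ {i} ∈ H} := by
  obtain ⟨T, -, hmax⟩ := exists_max_image univ (fun T => |u T|) univ_nonempty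
  have hpos : 0 < |u T| := by
    obtain ⟨T', hT'⟩ := Function.ne_iff.mp hu
    exact (abs_pos.mpr hT').trans_le (hmax T' (mem_univ _))
  refine ⟨T, by_contra fun hT => hpos.ne' (by simp [hsupp T hT]), ?_⟩
  refine le_of_mul_le_mul_right ?_ hpos
  calc |μ| * |u T| = |signedAdjacency u T| := by rw [heigen, Pi.smul_apply, smul_eq_mul, abs_mul]
    _ ≤ ∑ i, |edgeSign i T * u (T ∆ {i})| := abs_sum_le_sum_abs _ _
    _ ≤ ∑ i, if T ∆ {i} ∈ H then |u T| else 0 := by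
        refine sum_le_sum fun i _ => ?_
        rw [abs_mul, abs_edgeSign, one_mul]
        split_ifs with h
        · exact hmax _ (mem_univ _)
        · rw [hsupp _ h, abs_zero]
    _ = #{i | T ∆ {i} ∈ H} * |u T| := by rw [← sum_filter, sum_const, nsmul_eq_mul]

omit [DecidableEq ι] in
lemma exists_ne_zero_forall_notMem_eq_zero {H : Finset (Finset ι)}
    (hH : 2 ^ Fintype.card ι < 2 * #H) (A B : (Finset ι → ℝ) →ₗ[ℝ] (Finset ι → ℝ)) :
    ∃ v ≠ 0, ∀ T ∉ H, A v T = 0 ∧ B v T = 0 := by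
  let restrict : (Finset ι → ℝ) →ₗ[ℝ] ({T // T ∉ H} → ℝ) := LinearMap.funLeft ℝ ℝ Subtype.val
  let Φ := (restrict ∘ₗ A).prod (restrict ∘ₗ B)
  have hcompl : Fintype.card {T // T ∉ H} = 2 ^ Fintype.card ι - #H := by
    rw [Fintype.card_subtype_compl, Fintype.card_finset, Fintype.card_coe]
  have hker : LinearMap.ker Φ ≠ ⊥ := by
    apply LinearMap.ker_ne_bot_of_finrank_lt
    have := Nat.two_pow_pos (Fintype.card ι)
    rw [Module.finrank_prod, Module.finrank_fintype_fun_eq_card,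
      Module.finrank_fintype_fun_eq_card, Fintype.card_finset, hcompl]
    omega
  obtain ⟨v, hv, hv0⟩ := (Submodule.ne_bot_iff _).mp hker
  have hΦ : Φ v = 0 := hv
  exact ⟨v, hv0, fun T hT => ⟨congrFun (congrArg Prod.fst hΦ) ⟨T, hT⟩,
    congrFun (congrArg Prod.snd hΦ) ⟨T, hT⟩⟩⟩

-- With `q = √(card ι)`, both `(A + q) v` and `(A - q) v` are eigenvectors of `A` for `± q`.
-- Their difference is `2 q v`, so for `v ≠ 0` they do not both vanish.
theorem exists_mem_sqrt_card_le_card_neighbors {H : Finset (Finset ι)}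
    (hH : 2 ^ Fintype.card ι < 2 * #H) :
    ∃ T ∈ H, √(Fintype.card ι) ≤ #{i | T ∆ {i} ∈ H} := by
  rcases isEmpty_or_nonempty ι with _ | _
  · have hcard : 0 < 2 * #H := (Nat.zero_le _).trans_lt hH
    obtain ⟨T, hT⟩ : H.Nonempty := card_pos.mp (by omega)
    exact ⟨T, hT, by simp⟩
  set q := √(Fintype.card ι : ℝ)
  have hq_pos : 0 < q := Real.sqrt_pos.mpr (by exact_mod_cast Fintype.card_pos)
  have hq_sq : q * q = Fintype.card ι := Real.mul_self_sqrt (by positivity)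
  obtain ⟨v, hv, hsupp⟩ := exists_ne_zero_forall_notMem_eq_zero hH
    (signedAdjacency + q • LinearMap.id) (signedAdjacency - q • LinearMap.id)
  by_cases hplus : signedAdjacency v + q • v = 0
  · have hminus : signedAdjacency v - q • v ≠ 0 := by
      intro h
      have h2q : (2 * q) • v = 0 := calc
        (2 * q) • v = signedAdjacency v + q • v - (signedAdjacency v - q • v) := by module
        _ = 0 := by rw [hplus, h, sub_zero]
      exact (smul_ne_zero (by positivity) hv) h2q
    have heigen : signedAdjacency (signedAdjacency v - q • v)
        = (-q) • (signedAdjacency v - q • v) := by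
      rw [map_sub, map_smul, signedAdjacency_signedAdjacency, ← hq_sq]; module
    simpa [abs_of_pos hq_pos] using exists_mem_abs_eigenvalue_le_card_neighbors hminus
      (fun T hT => (hsupp T hT).2) heigen
  · have heigen : signedAdjacency (signedAdjacency v + q • v)
        = q • (signedAdjacency v + q • v) := by
      rw [map_add, map_smul, signedAdjacency_signedAdjacency, ← hq_sq]; module
    simpa [abs_of_pos hq_pos] using exists_mem_abs_eigenvalue_le_card_neighbors hplus
      (fun T hT => (hsupp T hT).1) heigen

end Huang

section Degree

variable {α : Type*} [DecidableEq α]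

/-- `G` has sensitivity at most `s` on the cube `Finset α`: no point has more than `s` neighbours
with a different value. -/
def SensitivityLE [Fintype α] {β : Type*} (G : Finset α → β) (s : ℕ) : Prop :=
  ∀ T, #{i | G (T ∆ {i}) ≠ G T} ≤ s

lemma SensitivityLE.comp_map {κ β : Type*} [Fintype α] [Fintype κ] [DecidableEq κ]
    {G : Finset α → β} {s : ℕ} (hG : SensitivityLE G s) (e : κ ↪ α) :
    SensitivityLE (fun T => G (T.map e)) s := by
  intro T
  rw [← card_map e]
  refine (card_le_card fun x hx => ?_).trans (hG (T.map e))
  obtain ⟨k, hk, rfl⟩ := mem_map.mp hx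
  simp only [mem_filter, mem_univ, true_and] at hk ⊢
  rwa [map_eq_image, image_symmDiff _ _ e.injective, image_singleton, ← map_eq_image] at hk

-- If the sum were positive, then `(-1) ^ #T * G T = 1` would hold at more than half of the points.
-- Neighbours in that set have different values of `G`, so this contradicts Huang's theorem.
lemma sum_neg_one_pow_card_mul_nonpos {ι : Type*} [Fintype ι] [DecidableEq ι] {G : Finset ι → ℝ}
    {s : ℕ} (hG : ∀ T, |G T| = 1) (hs : SensitivityLE G s) (hcard : s ^ 2 < Fintype.card ι) :
    ∑ T, (-1) ^ #T * G T ≤ 0 := by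
  by_contra! hpos
  set H : Finset (Finset ι) := {T | (-1) ^ #T * G T = 1}
  have hindicator : ∀ T, 1 + (-1) ^ #T * G T = if T ∈ H then 2 else 0 := by
    intro T
    have habs : |(-1) ^ #T * G T| = 1 := by simp [abs_mul, hG]
    rcases eq_or_eq_neg_of_abs_eq habs with h | h
    · rw [if_pos (by simpa [H] using h), h]; norm_num
    · rw [if_neg (by simp only [H, mem_filter, h]; norm_num), h]; norm_num
  have hH : 2 ^ Fintype.card ι < 2 * #H := by
    have hsum : (2 : ℝ) ^ Fintype.card ι + ∑ T, (-1) ^ #T * G T = #H * 2 := calc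
      _ = ∑ T, (1 + (-1) ^ #T * G T) := by simp [sum_add_distrib]
      _ = #H * 2 := by simp [hindicator]
    have : (2 : ℝ) ^ Fintype.card ι < 2 * #H := by linarith
    exact_mod_cast this
  obtain ⟨T, hT, hneighbors⟩ := exists_mem_sqrt_card_le_card_neighbors hH
  have hsensitive : #{i | T ∆ {i} ∈ H} ≤ s := by
    refine (card_le_card fun i hi => ?_).trans (hs T)
    simp only [H, mem_filter, mem_univ, true_and, neg_one_pow_card_symmDiff_singleton] at hi hT ⊢
    intro h
    rw [h] at hi
    linarith
  have hsqrt : √(Fintype.card ι : ℝ) ≤ s := hneighbors.trans (by exact_mod_cast hsensitive)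
  have : (Fintype.card ι : ℝ) ≤ s ^ 2 := (Real.sqrt_le_left (by positivity)).mp hsqrt
  exact hcard.not_ge (by exact_mod_cast this)

lemma sum_neg_one_pow_card_mul_eq_zero {ι : Type*} [Fintype ι] [DecidableEq ι] {G : Finset ι → ℝ}
    {s : ℕ} (hG : ∀ T, |G T| = 1) (hs : SensitivityLE G s) (hcard : s ^ 2 < Fintype.card ι) :
    ∑ T, (-1) ^ #T * G T = 0 := by
  refine (sum_neg_one_pow_card_mul_nonpos hG hs hcard).antisymm ?_
  have hneg := sum_neg_one_pow_card_mul_nonpos (G := fun T => -G T) (by simpa using hG)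
    (by simpa [SensitivityLE] using hs) hcard
  simpa using hneg

/-- The coefficient of the monomial `∏ i ∈ S, x i` in the multilinear polynomial that represents
`G` when a set is identified with its indicator vector. -/
def coefficient (G : Finset α → ℝ) (S : Finset α) : ℝ :=
  (-1) ^ #S * ∑ T ∈ S.powerset, (-1) ^ #T * G T

lemma coefficient_eq_zero_of_sq_lt_card [Fintype α] {G : Finset α → ℝ} {s : ℕ}
    (hG : ∀ T, |G T| = 1) (hs : SensitivityLE G s) {S : Finset α} (hS : s ^ 2 < #S) :
    coefficient G S = 0 := by
  let e : S ↪ α := Embedding.subtype (· ∈ S)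
  have hsum := sum_neg_one_pow_card_mul_eq_zero (fun T => hG _) (hs.comp_map e) (by simpa using hS)
  have hreindex : ∑ T : Finset S, (-1) ^ #T * G (T.map e)
      = ∑ T ∈ S.powerset, (-1) ^ #T * G T := by
    refine sum_nbij' (fun T => T.map e) (fun T => T.subtype (· ∈ S)) ?_ ?_ ?_ ?_ ?_
    · intro T _; exact mem_powerset.mpr (map_subtype_subset T)
    · simp
    · intro T _; ext x; simp [e]
    · intro T hT; exact subtype_map_of_mem (mem_powerset.mp hT)
    · simp
  rw [coefficient, ← hreindex, hsum, mul_zero]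

lemma coefficient_insert (G : Finset α → ℝ) {a : α} {S : Finset α} (ha : a ∉ S) :
    coefficient G (insert a S) = coefficient (fun T => G (insert a T)) S - coefficient G S := by
  have hinsert : ∑ T ∈ S.powerset, (-1) ^ #(insert a T) * G (insert a T)
      = -∑ T ∈ S.powerset, (-1) ^ #T * G (insert a T) := by
    rw [← sum_neg_distrib]
    refine sum_congr rfl fun T hT => ?_
    rw [card_insert_of_notMem (notMem_mono (mem_powerset.mp hT) ha)]
    ring
  rw [coefficient, coefficient, coefficient, sum_powerset_insert ha, hinsert,
    card_insert_of_notMem ha]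
  ring

omit [DecidableEq α] in
lemma sum_powerset_coefficient (G : Finset α → ℝ) (U : Finset α) :
    ∑ S ∈ U.powerset, coefficient G S = G U := by
  classical
  induction U using Finset.induction_on generalizing G with
  | empty => simp [coefficient]
  | insert a U ha ih =>
    rw [sum_powerset_insert ha, ← ih fun T => G (insert a T), ← sum_add_distrib]
    refine sum_congr rfl fun S hS => ?_
    rw [coefficient_insert G (notMem_mono (mem_powerset.mp hS) ha), add_sub_cancel]

/-- The monomial `∏ i ∈ S, x i` as a function on the cube `Finset α`. -/
def monomial (S T : Finset α) : ℝ := if S ⊆ T then 1 else 0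

variable (α) in
/-- The functions on the cube `Finset α` represented by real polynomials of degree at most `d`. -/
def degreeLE (d : ℕ) : Submodule ℝ (Finset α → ℝ) :=
  Submodule.span ℝ (monomial '' {S | #S ≤ d})

lemma monomial_mem_degreeLE {S : Finset α} {d : ℕ} (hS : #S ≤ d) : monomial S ∈ degreeLE α d :=
  Submodule.subset_span ⟨S, hS, rfl⟩

theorem SensitivityLE.mem_degreeLE [Fintype α] {G : Finset α → ℝ} {s : ℕ}
    (hs : SensitivityLE G s) (hG : ∀ T, |G T| = 1) : G ∈ degreeLE α (s ^ 2) := by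
  have hexpand : G = ∑ S, coefficient G S • monomial S := by
    ext U
    rw [← sum_powerset_coefficient G U, Finset.sum_apply]
    simp [monomial, ← sum_filter, filter_subset_univ]
  rw [hexpand]
  refine Submodule.sum_mem _ fun S _ => ?_
  by_cases hS : #S ≤ s ^ 2
  · exact Submodule.smul_mem _ _ (monomial_mem_degreeLE hS)
  · rw [coefficient_eq_zero_of_sq_lt_card hG hs (not_le.mp hS), zero_smul]
    exact Submodule.zero_mem _

-- Sending each `x ∈ S` to the block containing it turns `S ⊆ Y.biUnion B` into an inclusion in `Y`.
lemma comp_biUnion_mem_degreeLE {κ : Type*} [DecidableEq κ] {G : Finset α → ℝ} {d : ℕ}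
    (hG : G ∈ degreeLE α d) {B : κ → Finset α} (hB : Pairwise (Disjoint on B)) :
    (fun Y : Finset κ => G (Y.biUnion B)) ∈ degreeLE κ d := by
  refine Submodule.span_le (p := (degreeLE κ d).comap
    (LinearMap.funLeft ℝ ℝ fun Y : Finset κ => Y.biUnion B)).mpr ?_ hG
  rintro _ ⟨S, hS, rfl⟩
  change (fun Y : Finset κ => monomial S (Y.biUnion B)) ∈ degreeLE κ d
  by_cases hcover : ∀ x : S, ∃ i, x.1 ∈ B i
  · choose block hblock using hcover
    have hsubset : ∀ Y : Finset κ, S ⊆ Y.biUnion B ↔ univ.image block ⊆ Y := by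
      intro Y
      rw [image_subset_iff]
      refine ⟨fun h x _ => ?_, fun h x hx => mem_biUnion.mpr ⟨_, h ⟨x, hx⟩ (mem_univ _), hblock _⟩⟩
      obtain ⟨i, hi, hxi⟩ := mem_biUnion.mp (h x.2)
      exact hB.eq (not_disjoint_iff.mpr ⟨x, hxi, hblock x⟩) ▸ hi
    simp only [monomial, hsubset]
    exact monomial_mem_degreeLE (card_image_le.trans (by simpa using hS))
  · push Not at hcover
    obtain ⟨x, hxB⟩ := hcover
    have hzero : (fun Y : Finset κ => monomial S (Y.biUnion B)) = 0 := by
      ext Y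
      refine if_neg fun h => ?_
      obtain ⟨i, -, hxi⟩ := mem_biUnion.mp (h x.2)
      exact hxB i hxi
    rw [hzero]
    exact Submodule.zero_mem _

end Degree

section NoJump

open Polynomial

-- The `2 d`-th finite difference of `P` vanishes, and its middle coefficient is the largest one.
lemma abs_eval_zero_le_sum_abs_eval {P : ℝ[X]} {d : ℕ} (hP : P.natDegree < 2 * d) :
    |P.eval 0| ≤ ∑ k ∈ (range (2 * d + 1)).erase d, |P.eval (k - d : ℝ)| := by
  let c : ℕ → ℝ := fun k => (-1) ^ (2 * d - k) * (2 * d).choose k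
  have hc : ∀ k, |c k| = (2 * d).choose k := by simp [c, abs_mul]
  have hdiff : ∑ k ∈ range (2 * d + 1), c k * P.eval (k - d : ℝ) = 0 := by
    have h := congrFun (fwdDiff_iter_eq_zero_of_degree_lt hP) (-d : ℝ)
    simpa [fwdDiff_iter_eq_sum_shift, neg_add_eq_sub, c] using h
  have hmiddle : c d * P.eval 0 = -∑ k ∈ (range (2 * d + 1)).erase d, c k * P.eval (k - d : ℝ) := by
    rw [← add_sum_erase _ _ (mem_range.mpr (by omega : d < 2 * d + 1)), sub_self] at hdiff
    exact eq_neg_of_add_eq_zero_left hdiff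
  have hpos : (0 : ℝ) < (2 * d).choose d := by exact_mod_cast Nat.choose_pos (by omega)
  refine le_of_mul_le_mul_left ?_ hpos
  calc (2 * d).choose d * |P.eval 0| = |c d * P.eval 0| := by rw [abs_mul, hc]
    _ ≤ ∑ k ∈ (range (2 * d + 1)).erase d, |c k * P.eval (k - d : ℝ)| := by
        rw [hmiddle, abs_neg]; exact abs_sum_le_sum_abs _ _
    _ ≤ ∑ k ∈ (range (2 * d + 1)).erase d, (2 * d).choose d * |P.eval (k - d : ℝ)| := by
        refine sum_le_sum fun k _ => ?_
        rw [abs_mul, hc]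
        gcongr
        exact Nat.choose_le_centralBinom k d
    _ = _ := (mul_sum _ _ _).symm

lemma sum_erase_one_div_four_mul_sq_sub_one (d : ℕ) :
    ∑ k ∈ (range (2 * d + 1)).erase d, 1 / (4 * (k - d : ℝ) ^ 2 - 1)
      = (1 - 1 / (2 * d + 1) : ℝ) := by
  let F : ℕ → ℝ := fun k => -(1 / (2 * (2 * (k - d : ℝ) - 1)))
  have hodd : ∀ z : ℤ, (2 * (z : ℝ) - 1) ≠ 0 := fun z => by
    have : 2 * z - 1 ≠ 0 := by omega
    exact_mod_cast this
  have htelescope : ∀ k : ℕ, 1 / (4 * (k - d : ℝ) ^ 2 - 1) = F (k + 1) - F k := by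
    intro k
    have h₀ := hodd (k - d)
    have h₁ := hodd (k + 1 - d)
    have hfactor : 4 * (k - d : ℝ) ^ 2 - 1 = (2 * (k - d : ℝ) - 1) * (2 * (k + 1 - d : ℝ) - 1) := by
      ring
    push_cast at h₀ h₁
    simp only [F, hfactor]
    push_cast
    field_simp
    ring
  have hfull : ∑ k ∈ range (2 * d + 1), 1 / (4 * (k - d : ℝ) ^ 2 - 1) = -(1 / (2 * d + 1) : ℝ) := by
    have h₁ : (2 * d + 1 : ℝ) ≠ 0 := by positivity
    rw [sum_congr rfl fun k _ => htelescope k, sum_range_sub]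
    have h₀ : F 0 = 1 / (2 * (2 * d + 1)) := by
      simp only [F, Nat.cast_zero, zero_sub]
      rw [← one_div_neg_eq_neg_one_div]; ring_nf
    have hlast : F (2 * d + 1) = -(1 / (2 * (2 * d + 1))) := by
      simp only [F]; push_cast; ring_nf
    rw [h₀, hlast]
    field_simp
    norm_num
  have hmiddle : 1 / (4 * (d - d : ℝ) ^ 2 - 1) = -1 := by norm_num
  rw [← add_sum_erase _ _ (mem_range.mpr (by omega : d < 2 * d + 1)), hmiddle] at hfull
  linarith

-- The even polynomial `h (4 x²)` takes the value `h (4 m²)` at both integers `± m`.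
lemma abs_eval_zero_le_of_forall_abs_eval_four_mul_sq_le {h : ℝ[X]} {d : ℕ}
    (hdeg : h.natDegree < d) {K : ℝ}
    (hK : ∀ m : ℕ, 1 ≤ m → m ≤ d → |h.eval (4 * m ^ 2 : ℝ)| ≤ K / (4 * m ^ 2 - 1)) :
    |h.eval 0| ≤ K * (1 - 1 / (2 * d + 1)) := by
  let P : ℝ[X] := h.comp (C 4 * X ^ 2)
  have hP_eval : ∀ x, P.eval x = h.eval (4 * x ^ 2) := by simp [P]
  have hP_deg : P.natDegree < 2 * d := by
    rw [natDegree_comp, natDegree_C_mul_X_pow 2 _ (by norm_num)]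
    omega
  have hP_le : ∀ k ∈ (range (2 * d + 1)).erase d,
      |P.eval (k - d : ℝ)| ≤ K * (1 / (4 * (k - d : ℝ) ^ 2 - 1)) := by
    intro k hk
    simp only [mem_erase, mem_range] at hk
    let m : ℕ := ((k : ℤ) - d).natAbs
    have hm_sq : (k - d : ℝ) ^ 2 = (m : ℝ) ^ 2 := by
      have : ((k : ℤ) - d) ^ 2 = (m : ℤ) ^ 2 := (Int.natAbs_sq _).symm
      exact_mod_cast this
    rw [hP_eval, hm_sq, mul_one_div]
    exact hK m (by omega) (by omega)
  calc |h.eval 0| = |P.eval 0| := by simp [hP_eval]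
    _ ≤ _ := abs_eval_zero_le_sum_abs_eval hP_deg
    _ ≤ _ := sum_le_sum hP_le
    _ = _ := by rw [← mul_sum, sum_erase_one_div_four_mul_sq_sub_one]

lemma eval_sub_eval_eq_mul_eval_divByMonic {R : Type*} [CommRing R] (q : R[X]) (a x : R) :
    q.eval x - q.eval a = (x - a) * (q /ₘ (X - C a)).eval x := by
  have h := congrArg (Polynomial.eval x) (X_sub_C_mul_divByMonic_eq_sub_modByMonic q a)
  simpa [modByMonic_X_sub_C_eq_C_eval] using h.symm

theorem abs_eval_one_sub_eval_zero_le {q : ℝ[X]} {d : ℕ} (hq : q.natDegree ≤ d) {M : ℝ}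
    (hM : ∀ k : ℕ, k ≤ 4 * d ^ 2 → |q.eval (k : ℝ)| ≤ M) :
    |q.eval 1 - q.eval 0| ≤ 2 * M * (1 - 1 / (2 * d + 1)) := by
  rcases d.eq_zero_or_pos with rfl | hd
  · rw [eq_C_of_natDegree_le_zero hq]; simp
  let h : ℝ[X] := q /ₘ (X - C 1)
  have hdiv : ∀ x, q.eval x - q.eval 1 = (x - 1) * h.eval x :=
    eval_sub_eval_eq_mul_eval_divByMonic q 1
  have hdeg : h.natDegree < d := by
    rw [natDegree_divByMonic _ (monic_X_sub_C 1), natDegree_X_sub_C]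
    omega
  have hq_one : |q.eval 1| ≤ M := by simpa using hM 1 (by nlinarith)
  have hzero : |q.eval 1 - q.eval 0| = |h.eval 0| := by
    rw [abs_sub_comm, hdiv, zero_sub, neg_one_mul, abs_neg]
  rw [hzero]
  refine abs_eval_zero_le_of_forall_abs_eval_four_mul_sq_le hdeg fun m hm hmd => ?_
  have hm_one : (1 : ℝ) ≤ m := by exact_mod_cast hm
  have hpos : (0 : ℝ) < 4 * (m : ℝ) ^ 2 - 1 := by nlinarith
  have hq_m : |q.eval (4 * m ^ 2 : ℝ)| ≤ M := by exact_mod_cast hM (4 * m ^ 2) (by gcongr)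
  rw [le_div_iff₀ hpos]
  calc |h.eval (4 * m ^ 2 : ℝ)| * (4 * m ^ 2 - 1) = |q.eval (4 * m ^ 2 : ℝ) - q.eval 1| := by
        rw [hdiv, abs_mul, abs_of_pos hpos, mul_comm]
    _ ≤ |q.eval (4 * m ^ 2 : ℝ)| + |q.eval 1| := abs_sub _ _
    _ ≤ 2 * M := by linarith

end NoJump

section Symmetrization

open Polynomial

variable {κ : Type*} [Fintype κ] [DecidableEq κ]

lemma card_filter_subset_powersetCard {I : Finset κ} {k : ℕ} (hk : #I ≤ k) :
    #{Y ∈ powersetCard k univ | I ⊆ Y} = (Fintype.card κ - #I).choose (k - #I) := by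
  rw [← card_compl, ← card_powersetCard]
  refine card_nbij' (fun Y => Y \ I) (fun X => X ∪ I) ?_ ?_ ?_ ?_
  all_goals
    intro Y hY
    simp only [mem_coe, mem_filter, mem_powersetCard] at hY ⊢
  · rw [card_sdiff_of_subset hY.2, hY.1.2]
    exact ⟨fun x hx => mem_compl.mpr (mem_sdiff.mp hx).2, rfl⟩
  · have hdisj : Disjoint Y I := subset_compl_iff_disjoint_right.mp hY.1
    rw [card_union_of_disjoint hdisj, hY.2]
    exact ⟨⟨subset_univ _, by omega⟩, subset_union_right⟩
  · exact sdiff_union_of_subset hY.2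
  · exact union_sdiff_cancel_right (subset_compl_iff_disjoint_right.mp hY.1)

lemma card_filter_subset_powersetCard_mul_descFactorial (I : Finset κ) (k : ℕ) :
    #{Y ∈ powersetCard k univ | I ⊆ Y} * (Fintype.card κ).descFactorial #I
      = k.descFactorial #I * (Fintype.card κ).choose k := by
  rcases le_or_gt #I k with hk | hk
  · rw [card_filter_subset_powersetCard hk, Nat.descFactorial_eq_factorial_mul_choose,
      Nat.descFactorial_eq_factorial_mul_choose, mul_left_comm, mul_comm (Nat.choose _ (k - #I)),
      ← Nat.choose_mul hk]
    ring
  · have hempty : {Y ∈ powersetCard k (univ : Finset κ) | I ⊆ Y} = ∅ := by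
      refine filter_eq_empty_iff.mpr fun Y hY hI => hk.not_ge ?_
      exact (card_le_card hI).trans_eq (mem_powersetCard.mp hY).2
    rw [hempty, card_empty, Nat.descFactorial_of_lt hk, zero_mul, zero_mul]

/-- `q` is the symmetrization of `g`: its value at `k` is the average of `g` over the `k`-subsets
of `κ`. The identity is multiplied out, so that it says nothing for `k > card κ`. -/
def IsSymmetrization (q : ℝ[X]) (g : Finset κ → ℝ) : Prop :=
  ∀ k : ℕ, ∑ Y ∈ powersetCard k univ, g Y = (Fintype.card κ).choose k * q.eval (k : ℝ)

-- Among the `k`-subsets of an `n`-set, a fraction `k.descFactorial #I / n.descFactorial #I`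
-- contains `I`.
lemma isSymmetrization_monomial (I : Finset κ) :
    IsSymmetrization (C ((Fintype.card κ).descFactorial #I : ℝ)⁻¹ * descPochhammer ℝ #I)
      (monomial I) := by
  intro k
  have hpos : (0 : ℝ) < (Fintype.card κ).descFactorial #I := by
    exact_mod_cast Nat.descFactorial_pos.mpr (card_le_univ I)
  have hcount : (#{Y ∈ powersetCard k univ | I ⊆ Y} * (Fintype.card κ).descFactorial #I : ℝ)
      = k.descFactorial #I * (Fintype.card κ).choose k := by
    exact_mod_cast card_filter_subset_powersetCard_mul_descFactorial I k
  simp only [monomial, sum_boole, eval_mul, eval_C, descPochhammer_eval_eq_descFactorial]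
  rw [eq_div_of_mul_eq hpos.ne' hcount]
  ring

theorem exists_isSymmetrization_natDegree_le {g : Finset κ → ℝ} {d : ℕ} (hg : g ∈ degreeLE κ d) :
    ∃ q : ℝ[X], q.natDegree ≤ d ∧ IsSymmetrization q g := by
  induction hg using Submodule.span_induction with
  | mem g hg =>
    obtain ⟨I, hI, rfl⟩ := hg
    refine ⟨_, (natDegree_C_mul_le _ _).trans ?_, isSymmetrization_monomial I⟩
    rwa [descPochhammer_natDegree]
  | zero => exact ⟨0, by simp, fun k => by simp⟩
  | add g₁ g₂ _ _ h₁ h₂ =>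
    obtain ⟨q₁, hd₁, hq₁⟩ := h₁
    obtain ⟨q₂, hd₂, hq₂⟩ := h₂
    refine ⟨q₁ + q₂, natDegree_add_le_of_degree_le hd₁ hd₂, fun k => ?_⟩
    simp [sum_add_distrib, hq₁ k, hq₂ k, mul_add]
  | smul c g _ h =>
    obtain ⟨q, hd, hq⟩ := h
    refine ⟨c • q, (natDegree_smul_le c q).trans hd, fun k => ?_⟩
    simp [← mul_sum, hq k, mul_left_comm]

omit [DecidableEq κ] in
lemma IsSymmetrization.abs_eval_le {q : ℝ[X]} {g : Finset κ → ℝ} (hq : IsSymmetrization q g)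
    {M : ℝ} (hg : ∀ Y, |g Y| ≤ M) {k : ℕ} (hk : k ≤ Fintype.card κ) : |q.eval (k : ℝ)| ≤ M := by
  have hpos : (0 : ℝ) < (Fintype.card κ).choose k := by exact_mod_cast Nat.choose_pos hk
  refine le_of_mul_le_mul_left ?_ hpos
  calc (Fintype.card κ).choose k * |q.eval (k : ℝ)| = |∑ Y ∈ powersetCard k univ, g Y| := by
        rw [hq k, abs_mul, abs_of_pos hpos]
    _ ≤ ∑ Y ∈ powersetCard k univ, |g Y| := abs_sum_le_sum_abs _ _
    _ ≤ ∑ _Y ∈ powersetCard k (univ : Finset κ), M := sum_le_sum fun Y _ => hg Y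
    _ = (Fintype.card κ).choose k * M := by simp

theorem card_le_four_mul_sq_of_mem_degreeLE {g : Finset κ → ℝ} {d : ℕ} (hg : g ∈ degreeLE κ d)
    (habs : ∀ Y, |g Y| = 1) (hflip : ∀ i, g {i} = -g ∅) : Fintype.card κ ≤ 4 * d ^ 2 := by
  by_contra! hcard
  obtain ⟨q, hdeg, hq⟩ := exists_isSymmetrization_natDegree_le hg
  have hq_zero : q.eval 0 = g ∅ := by simpa using (hq 0).symm
  have hq_one : q.eval 1 = -g ∅ := by
    have hne : (Fintype.card κ : ℝ) ≠ 0 := by exact_mod_cast (Nat.zero_le _).trans_lt hcard |>.ne'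
    refine mul_left_cancel₀ hne ?_
    simpa [powersetCard_one, hflip] using (hq 1).symm
  have hjump : |q.eval 1 - q.eval 0| = 2 := by
    rw [hq_one, hq_zero, ← neg_add', abs_neg, ← two_mul, abs_mul, habs]; norm_num
  have hle := abs_eval_one_sub_eval_zero_le hdeg
    fun k hk => hq.abs_eval_le (fun Y => (habs Y).le) (hk.trans hcard.le)
  have hpos : (0 : ℝ) < 1 / (2 * d + 1) := by positivity
  linarith

omit [DecidableEq κ] in
theorem card_disjoint_blocks_le {α : Type*} [DecidableEq α] {G : Finset α → ℝ} {d : ℕ}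
    (hG : G ∈ degreeLE α d) (habs : ∀ T, |G T| = 1) {B : κ → Finset α}
    (hdisj : Pairwise (Disjoint on B)) (hflip : ∀ i, G (B i) = -G ∅) :
    Fintype.card κ ≤ 4 * d ^ 2 := by
  classical
  exact card_le_four_mul_sq_of_mem_degreeLE (comp_biUnion_mem_degreeLE hG hdisj) (fun _ => habs _)
    (by simpa using hflip)

end Symmetrization

section Certificate

lemma SensitivityLE.card_le_of_minimal {α β : Type*} [Fintype α] [DecidableEq α]
    {G : Finset α → β} {s : ℕ} (hs : SensitivityLE G s) {B : Finset α}
    (hB : Minimal (fun B => G B ≠ G ∅) B) : #B ≤ s := by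
  refine (card_le_card fun i hi => ?_).trans (hs B)
  have herase : B ∆ {i} = B.erase i := by
    ext j; simp only [mem_symmDiff, mem_singleton, mem_erase]; grind
  have hempty : G (B.erase i) = G ∅ := not_not.mp (hB.not_prop_of_lt (erase_ssubset hi))
  rw [mem_filter, herase, hempty]
  exact ⟨mem_univ i, hB.prop.symm⟩

-- Take the union of a maximal family of disjoint minimal blocks that change the value at `∅`. By
-- maximality every block that changes the value meets it.
theorem SensitivityLE.exists_card_le_forall_disjoint {α : Type*} [Fintype α] [DecidableEq α]
    {G : Finset α → ℝ} {s : ℕ} (hs : SensitivityLE G s) (hG : ∀ T, |G T| = 1) :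
    ∃ U, #U ≤ 4 * s ^ 5 ∧ ∀ T, Disjoint T U → G T = G ∅ := by
  obtain ⟨F, ⟨hmin, hdisj⟩, hmax⟩ := exists_maximal_of_wellFoundedGT
    (fun F : Finset (Finset α) => (∀ B ∈ F, Minimal (fun B => G B ≠ G ∅) B) ∧
      (F : Set (Finset α)).PairwiseDisjoint id) ⟨∅, by simp⟩
  have hF : #F ≤ 4 * (s ^ 2) ^ 2 := by
    have hflip : ∀ B : F, G B = -G ∅ := fun B =>
      (abs_eq_abs.mp ((hG B).trans (hG ∅).symm)).resolve_left (hmin B B.2).prop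
    simpa using card_disjoint_blocks_le (hs.mem_degreeLE hG) hG
      ((pairwise_subtype_iff_pairwise_set _ _).mpr hdisj) hflip
  refine ⟨F.biUnion id, ?_, fun T hT => by_contra fun hne => ?_⟩
  · calc #(F.biUnion id) ≤ #F * s :=
          card_biUnion_le_card_mul _ _ _ fun B hB => hs.card_le_of_minimal (hmin B hB)
      _ ≤ 4 * (s ^ 2) ^ 2 * s := Nat.mul_le_mul_right _ hF
      _ = 4 * s ^ 5 := by ring
  · obtain ⟨B, hBT, hB⟩ := exists_minimal_le_of_wellFoundedLT (fun B => G B ≠ G ∅) T hne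
    have hBF : ∀ B' ∈ F, Disjoint B B' := fun B' hB' =>
      hT.mono hBT (subset_biUnion_of_mem id hB')
    have hmem : B ∈ F := by
      refine hmax ⟨(forall_mem_insert B F _).mpr ⟨hB, hmin⟩, ?_⟩
        (subset_insert B F) (mem_insert_self B F)
      rw [coe_insert]
      exact hdisj.insert fun B' hB' _ => hBF B' hB'
    refine hB.prop (congrArg G ?_)
    exact disjoint_self.mp (hBF B hmem)

variable {ι : Type*} [DecidableEq ι]

/-- The point `x` with the coordinates in `T` flipped. -/
def flipOn (x : ι → Bool) (T : Finset ι) : ι → Bool := fun i => x i ^^ decide (i ∈ T)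

lemma flipOn_empty (x : ι → Bool) : flipOn x ∅ = x := by
  ext i; simp [flipOn]

lemma flipOn_symmDiff_singleton (x : ι → Bool) (T : Finset ι) (i : ι) :
    flipOn x (T ∆ {i}) = update (flipOn x T) i (!(flipOn x T i)) := by
  ext j
  rcases eq_or_ne j i with rfl | hji
  · by_cases hj : j ∈ T <;> simp [flipOn, mem_symmDiff, hj]
  · simp [flipOn, mem_symmDiff, hji]

variable [Fintype ι]

lemma flipOn_filter_ne (x y : ι → Bool) : flipOn x {i | y i ≠ x i} = y := by
  ext i
  by_cases h : y i = x i
  · simp [flipOn, h]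
  · simp [flipOn, Bool.eq_not_of_ne h]

/-- The coordinates in whose directions `f` is sensitive at `x`. -/
def sensitiveCoords (f : (ι → Bool) → Bool) (x : ι → Bool) : Finset ι :=
  {i | f (update x i (!(x i))) ≠ f x}

/-- `U` is a certificate for `f` at `x`: the values of `x` on `U` determine the value of `f`. -/
def IsCertificate {ι : Type*} (f : (ι → Bool) → Bool) (x : ι → Bool) (U : Finset ι) : Prop :=
  ∀ y, Set.EqOn y x U → f y = f x

theorem exists_isCertificate_card_le {f : (ι → Bool) → Bool} {s : ℕ}
    (hs : ∀ x, #(sensitiveCoords f x) ≤ s) (x : ι → Bool) :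
    ∃ U, IsCertificate f x U ∧ #U ≤ 4 * s ^ 5 := by
  let G : Finset ι → ℝ := fun T => if f (flipOn x T) = f x then 1 else -1
  have hG : ∀ T, |G T| = 1 := fun T => by simp only [G]; split_ifs <;> simp
  have hGs : SensitivityLE G s := by
    refine fun T => (card_le_card fun i hi => ?_).trans (hs (flipOn x T))
    simp only [sensitiveCoords, mem_filter, mem_univ, true_and] at hi ⊢
    rw [← flipOn_symmDiff_singleton]
    exact fun h => hi (by simp only [G, h])
  obtain ⟨U, hU, hdisj⟩ := hGs.exists_card_le_forall_disjoint hG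
  refine ⟨U, fun y hy => by_contra fun hne => ?_, hU⟩
  have hGy := hdisj {i | y i ≠ x i} (disjoint_left.mpr fun i hi hiU =>
    (mem_filter.mp hi).2 (hy hiU))
  simp only [G, flipOn_filter_ne, flipOn_empty, if_neg hne] at hGy
  norm_num at hGy

/-- Fixing the coordinates in `P` to their values in `p` turns `f` into the `i`-th coordinate or
its negation. -/
def ReducesToLiteral {ι : Type*} (f : (ι → Bool) → Bool) (P : Finset ι) (p : ι → Bool) (i : ι) :
    Prop :=
  (∀ y, Set.EqOn y p P → f y = y i) ∨ (∀ y, Set.EqOn y p P → f y = !(y i))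

omit [Fintype ι] in
lemma IsCertificate.reducesToLiteral {f : (ι → Bool) → Bool} {x : ι → Bool} {i : ι}
    {U V : Finset ι} (hU : IsCertificate f x U) (hV : IsCertificate f (update x i (!(x i))) V)
    (hi : f (update x i (!(x i))) ≠ f x) : ReducesToLiteral f ((U ∪ V).erase i) x i := by
  have hsame : ∀ y, Set.EqOn y x ((U ∪ V).erase i) → y i = x i → f y = f x := by
    intro y hy hyi
    refine hU y fun l hl => ?_
    rcases eq_or_ne l i with rfl | hli
    · exact hyi
    · exact hy (mem_erase.mpr ⟨hli, mem_union_left V hl⟩)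
  have hflip : ∀ y, Set.EqOn y x ((U ∪ V).erase i) → y i ≠ x i → f y = !(f x) := by
    intro y hy hyi
    rw [← Bool.eq_not_of_ne hi]
    refine hV y fun l hl => ?_
    rcases eq_or_ne l i with rfl | hli
    · rw [update_self]; exact Bool.eq_not_of_ne hyi
    · rw [update_of_ne hli]; exact hy (mem_erase.mpr ⟨hli, mem_union_right U hl⟩)
  rcases eq_or_ne (f x) (x i) with hfx | hfx
  · refine .inl fun y hy => ?_
    rcases eq_or_ne (y i) (x i) with hyi | hyi
    · rw [hsame y hy hyi, hfx, hyi]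
    · rw [hflip y hy hyi, hfx, Bool.eq_not_of_ne hyi]
  · refine .inr fun y hy => ?_
    rcases eq_or_ne (y i) (x i) with hyi | hyi
    · rw [hsame y hy hyi, hyi, Bool.eq_not_of_ne hfx]
    · rw [hflip y hy hyi, Bool.eq_not_of_ne hfx, Bool.eq_not_of_ne hyi]

theorem exists_reducesToLiteral {f : (ι → Bool) → Bool} {s : ℕ}
    (hs : ∀ x, #(sensitiveCoords f x) ≤ s) {i : ι} {x : ι → Bool}
    (hi : f (update x i (!(x i))) ≠ f x) :
    ∃ P, #P ≤ 8 * s ^ 5 ∧ i ∉ P ∧ ReducesToLiteral f P x i := by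
  obtain ⟨U, hU, hUcard⟩ := exists_isCertificate_card_le hs x
  obtain ⟨V, hV, hVcard⟩ := exists_isCertificate_card_le hs (update x i (!(x i)))
  refine ⟨(U ∪ V).erase i, ?_, notMem_erase i _, hU.reducesToLiteral hV hi⟩
  calc #((U ∪ V).erase i) ≤ #(U ∪ V) := card_erase_le
    _ ≤ #U + #V := card_union_le U V
    _ ≤ 8 * s ^ 5 := by omega

end Certificate

section Coloring

variable {ι C : Type*} [Fintype C]

lemma card_filter_apply_eq_mul_card [Fintype ι] [DecidableEq ι] [DecidableEq C] {u v : ι}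
    (huv : u ≠ v) :
    #{c : ι → C | c u = c v} * Fintype.card C = Fintype.card (ι → C) := by
  rw [← card_univ, ← card_univ, ← card_product]
  refine card_nbij' (fun p => update p.1 u p.2) (fun c => (update c u (c v), c u)) ?_ ?_ ?_ ?_
  · simp
  · simp [huv.symm]
  · rintro ⟨c, m⟩ hc
    have hcuv : c u = c v := by simpa using hc
    simp [huv.symm, ← hcuv]
  · intro c _
    simp

lemma card_filter_not_injOn_mul_card_le [Fintype ι] [DecidableEq ι] (S : Finset ι) :
    #{c : ι → C | ¬Set.InjOn c S} * Fintype.card C ≤ #S ^ 2 * Fintype.card (ι → C) := by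
  classical
  have hcover : ({c : ι → C | ¬Set.InjOn c S} : Finset (ι → C))
      ⊆ S.offDiag.biUnion fun p => {c | c p.1 = c p.2} := by
    intro c hc
    have hc := (mem_filter.mp hc).2
    simp only [Set.InjOn, not_forall] at hc
    obtain ⟨u, hu, v, hv, hcuv, huv⟩ := hc
    exact mem_biUnion.mpr ⟨(u, v), mem_offDiag.mpr ⟨hu, hv, huv⟩, by simpa using hcuv⟩
  calc #{c : ι → C | ¬Set.InjOn c S} * Fintype.card C
      ≤ (∑ p ∈ S.offDiag, #{c : ι → C | c p.1 = c p.2}) * Fintype.card C :=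
        Nat.mul_le_mul_right _ ((card_le_card hcover).trans card_biUnion_le)
    _ = ∑ _p ∈ S.offDiag, Fintype.card (ι → C) := by
        rw [sum_mul]
        exact sum_congr rfl fun p hp => card_filter_apply_eq_mul_card (mem_offDiag.mp hp).2.2
    _ = #S.offDiag * Fintype.card (ι → C) := by rw [sum_const, smul_eq_mul]
    _ ≤ #S ^ 2 * Fintype.card (ι → C) := by
        rw [offDiag_card, sq]
        exact Nat.mul_le_mul_right _ (Nat.sub_le _ _)

-- A uniformly random colouring is injective on each `S k` with probability at least `1 / 2`.
theorem exists_coloring_card_le_two_mul_card_injOn [Finite ι] {κ : Type*} [Fintype κ] [Nonempty C]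
    {L : ℕ} (hC : 2 * L ^ 2 ≤ Fintype.card C) {S : κ → Finset ι} (hS : ∀ k, #(S k) ≤ L) :
    ∃ c : ι → C, Fintype.card κ ≤ 2 * #{k | Set.InjOn c (S k)} := by
  classical
  have := Fintype.ofFinite ι
  have hhalf : ∀ k, Fintype.card (ι → C) ≤ 2 * #{c : ι → C | Set.InjOn c (S k)} := by
    intro k
    have hbad : 2 * #{c : ι → C | ¬Set.InjOn c (S k)} ≤ Fintype.card (ι → C) := by
      refine Nat.le_of_mul_le_mul_right ?_ (Fintype.card_pos (α := C))
      calc 2 * #{c : ι → C | ¬Set.InjOn c (S k)} * Fintype.card C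
          = 2 * (#{c : ι → C | ¬Set.InjOn c (S k)} * Fintype.card C) := mul_assoc _ _ _
        _ ≤ 2 * (#(S k) ^ 2 * Fintype.card (ι → C)) :=
            Nat.mul_le_mul_left 2 (card_filter_not_injOn_mul_card_le (S k))
        _ ≤ 2 * (L ^ 2 * Fintype.card (ι → C)) := by gcongr; exact hS k
        _ = Fintype.card (ι → C) * (2 * L ^ 2) := by ring
        _ ≤ Fintype.card (ι → C) * Fintype.card C := Nat.mul_le_mul_left _ hC
    have hsplit := card_filter_add_card_filter_not (s := (univ : Finset (ι → C)))
      (fun c => Set.InjOn c (S k : Set ι))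
    rw [card_univ] at hsplit
    omega
  have hsum : ∑ _c : ι → C, Fintype.card κ ≤ ∑ c : ι → C, 2 * #{k | Set.InjOn c (S k)} := calc
    _ = ∑ _k : κ, Fintype.card (ι → C) := by simp [mul_comm]
    _ ≤ ∑ k, 2 * #{c : ι → C | Set.InjOn c (S k)} := sum_le_sum fun k _ => hhalf k
    _ = _ := by simp only [← mul_sum, card_filter]; rw [sum_comm]
  obtain ⟨c, -, hc⟩ := exists_le_of_sum_le univ_nonempty hsum
  exact ⟨c, hc⟩

-- Colour so that `c` is injective on `insert i (P i)` for half of the `i`, and let `T` be the most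
-- popular colour class among those `i`.
theorem exists_coloring_injOn_disjoint [Fintype ι] [Nonempty C] {P : ι → Finset ι} {L : ℕ}
    (hiP : ∀ i, i ∉ P i) (hP : ∀ i, #(P i) < L) (hC : 2 * L ^ 2 ≤ Fintype.card C) :
    ∃ (c : ι → C) (T : Finset ι), Fintype.card ι ≤ 2 * Fintype.card C * #T ∧
      ∀ i ∈ T, Set.InjOn c (P i) ∧ Disjoint (P i) T := by
  classical
  obtain ⟨c, hc⟩ := exists_coloring_card_le_two_mul_card_injOn hC
    fun i => (card_insert_le i (P i)).trans (hP i)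
  let good : Finset ι := {i | Set.InjOn c (insert i (P i) : Finset ι)}
  obtain ⟨m, -, hm⟩ := exists_max_image univ (fun m : C => #{i ∈ good | c i = m}) univ_nonempty
  refine ⟨c, {i ∈ good | c i = m}, ?_, fun i hi => ?_⟩
  · have hgood : #good ≤ #{i ∈ good | c i = m} * Fintype.card C :=
      card_le_mul_card_image_of_maps_to (fun i _ => mem_univ (c i)) _ hm
    calc Fintype.card ι ≤ 2 * #good := hc
      _ ≤ 2 * (#{i ∈ good | c i = m} * Fintype.card C) := Nat.mul_le_mul_left 2 hgood
      _ = 2 * Fintype.card C * #{i ∈ good | c i = m} := by ring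
  · simp only [good, mem_filter, mem_univ, true_and] at hi
    refine ⟨hi.1.mono (coe_subset.mpr (subset_insert i (P i))),
      disjoint_left.mpr fun l hl hlT => ?_⟩
    have hli : l = i := hi.1 (mem_insert_of_mem hl) (mem_insert_self i (P i))
      ((mem_filter.mp hlT).2.trans hi.2.symm)
    exact hiP i (hli ▸ hl)

end Coloring

section Projection

/-- Some restriction of the first `r` variables turns `g` into the literal of the variable `j`
among the last `t`. -/
def AddressesLiteral {r t : ℕ} (g : (Fin (r + t) → Bool) → Bool) (j : Fin t) : Prop :=
  ∃ a : Fin r → Bool,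
    (∀ b : Fin t → Bool, g (Fin.append a b) = b j) ∨
    (∀ b : Fin t → Bool, g (Fin.append a b) = !(b j))

variable {n : ℕ} {f : (Fin n → Bool) → Bool}

-- The variables in `T` become the data variables. The others are merged according to their colour.
theorem exists_projection_addressing {M : ℕ} {c : Fin n → Fin M} {T : Finset (Fin n)}
    {P : Fin n → Finset (Fin n)} {p : Fin n → Fin n → Bool}
    (hf : ∀ i ∈ T, ReducesToLiteral f (P i) (p i) i)
    (hP : ∀ i ∈ T, Set.InjOn c (P i) ∧ Disjoint (P i) T) :
    ∃ ν : Fin n → Fin (M + #T), ∀ j, AddressesLiteral (fun x => f (x ∘ ν)) j := by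
  let ν : Fin n → Fin (M + #T) := fun i =>
    if h : i ∈ T then Fin.natAdd M (T.equivFin ⟨i, h⟩) else Fin.castAdd #T (c i)
  refine ⟨ν, fun j => ?_⟩
  obtain ⟨⟨i, hi⟩, rfl⟩ := T.equivFin.surjective j
  obtain ⟨hinj, hdisj⟩ := hP i hi
  have : Nonempty (Fin n) := ⟨i⟩
  let a : Fin M → Bool := p i ∘ invFunOn c (P i)
  have ha : ∀ b : Fin #T → Bool, Set.EqOn (fun l => Fin.append a b (ν l)) (p i) (P i) := by
    intro b l hl
    simp only [ν, dif_neg (disjoint_left.mp hdisj hl), Fin.append_left, a, comp_apply,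
      hinj.leftInvOn_invFunOn hl]
  have hi_val : ∀ b : Fin #T → Bool, Fin.append a b (ν i) = b (T.equivFin ⟨i, hi⟩) := by
    intro b
    simp only [ν, dif_pos hi, Fin.append_right]
  exact ⟨a, (hf i hi).imp (fun h b => (h _ (ha b)).trans (hi_val b))
    fun h b => (h _ (ha b)).trans (congrArg not (hi_val b))⟩

theorem exists_projection_of_card_sensitiveCoords_le {s : ℕ}
    (hf : ∀ i, ∃ x, f (update x i (!(x i))) ≠ f x) (hs : ∀ x, #(sensitiveCoords f x) ≤ s) :
    ∃ t, n ≤ 4 * (8 * s ^ 5 + 1) ^ 2 * t ∧ ∃ ν : Fin n → Fin (2 * (8 * s ^ 5 + 1) ^ 2 + t),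
      ∀ j, AddressesLiteral (fun x => f (x ∘ ν)) j := by
  choose x hx using hf
  choose P hP hiP hred using fun i => exists_reducesToLiteral hs (hx i)
  obtain ⟨c, T, hT, hPT⟩ := exists_coloring_injOn_disjoint (C := Fin (2 * (8 * s ^ 5 + 1) ^ 2))
    hiP (fun i => Nat.lt_succ_of_le (hP i)) (Fintype.card_fin _).ge
  refine ⟨#T, ?_, exists_projection_addressing (fun i _ => hred i) hPT⟩
  rw [Fintype.card_fin, Fintype.card_fin] at hT
  linarith

end Projection

end BooleanCube

theorem pseudoaddressing_projection :
    ∃ C : ℝ, 1 ≤ C ∧ ∃ k : ℕ, 1 ≤ k ∧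
      ∀ (n : ℕ) (f : (Fin n → Bool) → Bool), TrulyVariate f → 2 ≤ sensitivity f →
        ∃ r t : ℕ, 0 < r ∧ 0 < t ∧
          (r : ℝ) ≤ C * (sensitivity f : ℝ) ^ k ∧
          (n : ℝ) / (C * (sensitivity f : ℝ) ^ k) ≤ (t : ℝ) ∧
          ∃ ν : Fin n → Fin (r + t),
            ∀ j : Fin t, ∃ a : Fin r → Bool,
              (∀ b : Fin t → Bool, f (fun i => Fin.append a b (ν i)) = b j) ∨
              (∀ b : Fin t → Bool, f (fun i => Fin.append a b (ν i)) = !(b j)) := by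
  refine ⟨324, by norm_num, 10, by norm_num, fun n f hf hs => ?_⟩
  set s := sensitivity f with hs_def
  have hsens : ∀ x, (BooleanCube.sensitiveCoords f x).card ≤ s := fun x =>
    Finset.le_sup (f := fun x => (BooleanCube.sensitiveCoords f x).card) (Finset.mem_univ x)
  have hrel : ∀ i, ∃ x, f (Function.update x i (!(x i))) ≠ f x := fun i => by convert hf i
  obtain ⟨t, ht, hν⟩ := BooleanCube.exists_projection_of_card_sensitiveCoords_le hrel hsens
  have hn : 0 < n := Nat.pos_of_ne_zero fun h => by
    subst h
    simp [hs_def, sensitivity] at hs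
  have hM : (8 * s ^ 5 + 1) ^ 2 ≤ 81 * s ^ 10 := calc
    (8 * s ^ 5 + 1) ^ 2 ≤ (9 * s ^ 5) ^ 2 := by
      have : 1 ≤ s ^ 5 := Nat.one_le_pow _ _ (by omega)
      gcongr; omega
    _ = 81 * s ^ 10 := by ring
  refine ⟨_, t, by positivity, Nat.pos_of_ne_zero fun h => ?_, ?_, ?_, hν⟩
  · subst h; omega
  · exact_mod_cast (by omega : 2 * (8 * s ^ 5 + 1) ^ 2 ≤ 324 * s ^ 10)
  · refine div_le_of_le_mul₀ (by positivity) t.cast_nonneg ?_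
    exact_mod_cast (by nlinarith : n ≤ t * (324 * s ^ 10))
end
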